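/- arXiv:1009.1565 — 2 statements merged into one kernel-verified Lean document; each statement's English description precedes it below -/
import Mathlib

section
/- Suppose a planar compactum X contains two disjoint subcontinua X₁, X₂ and three pairwise disjoint subcontinua C¹, C², C³ such that Xᵢ ∩ Cʲ ≠ ∅ for all i ∈ {1,2} and j ∈ {1,2,3}. Then X is not unshielded. -/
open Set Filter Metric Topology Function

/-- A relation on a topological space is closed if its graph is closed. -/
def ClosedRel {Y : Type*} [TopologicalSpace Y] (r : Y → Y → Prop) : Prop :=
  IsClosed {p : Y × Y | r p.1 p.2}

/-- A relation respects a family `A` of subsets if it is closed and each member of `A`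
is contained in a single class. -/
def Respects {Y : Type*} [TopologicalSpace Y] (A : Set (Set Y)) (r : Y → Y → Prop) : Prop :=
  ClosedRel r ∧ ∀ a ∈ A, ∀ x ∈ a, ∀ y ∈ a, r x y

/-- The finest closed equivalence relation respecting `A`: the intersection of all
closed equivalence relations respecting `A`. -/
def finestRel {Y : Type*} [TopologicalSpace Y] (A : Set (Set Y)) : Y → Y → Prop :=
  fun x y => ∀ r : Y → Y → Prop, Equivalence r → Respects A r → r x y

/-- A limit continuum: a subcontinuum which is the Hausdorff limit of a sequence of
pairwise disjoint subcontinua. -/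
def IsLimCont {Y : Type*} [MetricSpace Y] (C : Set Y) : Prop :=
  IsCompact C ∧ IsConnected C ∧
  ∃ F : ℕ → Set Y, (∀ n, IsCompact (F n) ∧ IsConnected (F n)) ∧
    Pairwise (Disjoint on F) ∧
    Tendsto (fun n => EMetric.hausdorffEdist (F n) C) atTop (nhds 0)

/-- Finitely Suslinian: every family of pairwise disjoint subcontinua of diameter at least
`ε > 0` is finite. -/
def FinSus (Y : Type*) [MetricSpace Y] : Prop :=
  ∀ ε : ℝ, 0 < ε → ∀ S : Set (Set Y),
    (∀ C ∈ S, IsCompact C ∧ IsConnected C ∧ ε ≤ Metric.diam C) →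
    S.Pairwise Disjoint → S.Finite

/-- A subcontinuum of the subset `Z`. -/
def SubcontIn {E : Type*} [MetricSpace E] (Z C : Set E) : Prop :=
  C ⊆ Z ∧ IsCompact C ∧ IsConnected C

/-- A limit continuum of the subset `Z`. -/
def LimContIn {E : Type*} [MetricSpace E] (Z C : Set E) : Prop :=
  SubcontIn Z C ∧ ∃ F : ℕ → Set E, (∀ n, SubcontIn Z (F n)) ∧
    Pairwise (Disjoint on F) ∧
    Tendsto (fun n => EMetric.hausdorffEdist (F n) C) atTop (nhds 0)

/-- The subset `Z` is finitely Suslinian. -/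
def FinSusIn {E : Type*} [MetricSpace E] (Z : Set E) : Prop :=
  ∀ ε : ℝ, 0 < ε → ∀ S : Set (Set E),
    (∀ C ∈ S, SubcontIn Z C ∧ ε ≤ Metric.diam C) → S.Pairwise Disjoint → S.Finite

/-- A planar compactum is unshielded if it is the boundary of the unbounded component of
its complement. -/
def Unshielded (X : Set ℂ) : Prop :=
  ∀ z, z ∉ X → ¬Bornology.IsBounded (connectedComponentIn Xᶜ z) →
    X = frontier (connectedComponentIn Xᶜ z)

/-! Let `K` and `L` be the two continua meeting the three sides `C j`, and suppose that a domain `U`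
disjoint from all of them accumulates at every point of the sides. On each side there is a hub `c j`
from which `K` and `L` can each be reached arbitrarily close to `C j` without meeting the other, and
a point of `U` can be joined to every hub while avoiding `K`, `L` and the other sides. Contracting
`K` and `L`, this would be a planar drawing of `K₃,₃`.

That `K₃,₃` is not planar follows by measuring how much each edge turns around the end points of the
others: for two stars with the same three leaves whose nonadjacent edges are disjoint, the total
turnings differ by an odd multiple of `2πi`. For three such stars the sum of two odd numbers would
be odd. -/

section LogVariation

open scoped unitInterval Real

instance locallyPathConnectedSpace_unitInterval : LocallyPathConnectedSpace I :=
  (isQuotientMap_projIcc (h := zero_le_one)).locallyPathConnectedSpace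

instance contractibleSpace_unitInterval : ContractibleSpace I :=
  (convex_Icc 0 1).contractibleSpace (nonempty_Icc.2 zero_le_one)

lemma exists_continuous_exp_eq {X : Type*} [TopologicalSpace X] [SimplyConnectedSpace X]
    [LocallyPathConnectedSpace X] {f : X → ℂ} (hf : Continuous f) (h0 : ∀ x, f x ≠ 0) :
    ∃ l : X → ℂ, Continuous l ∧ ∀ x, Complex.exp (l x) = f x := by
  obtain ⟨x₀⟩ : Nonempty X := inferInstance
  obtain ⟨l, ⟨-, hl⟩, -⟩ := Complex.isCoveringMapOn_exp.existsUnique_continuousMap_lifts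
    ⟨f, hf⟩ (Complex.exp_log (h0 x₀)) h0
  exact ⟨l, l.continuous, congrFun hl⟩

lemma sub_eq_sub_of_exp_eq_mul_exp {X : Type*} [TopologicalSpace X] [PreconnectedSpace X]
    {l l' : X → ℂ} (hl : Continuous l) (hl' : Continuous l') {c : ℂ}
    (h : ∀ x, Complex.exp (l x) = c * Complex.exp (l' x)) (x y : X) :
    l x - l y = l' x - l' y := by
  have hc : ∀ x, Complex.exp (l x - l' x) = c := fun x => by
    rw [Complex.exp_sub, h, mul_div_cancel_right₀ _ (Complex.exp_ne_zero _)]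
  have hconst : l x - l' x = l y - l' y :=
    Complex.isCoveringMap_exp.const_of_comp (hl.sub hl')
      (fun x y => Subtype.ext ((hc x).trans (hc y).symm)) x y
  linear_combination hconst

/-- The increment along `γ` of a continuous logarithm of `γ - z`, whose imaginary part is the
variation of the argument of `γ` seen from `z`. It is only meaningful when `γ` avoids `z`. -/
noncomputable def logVariation (z : ℂ) {x y : ℂ} (γ : Path x y) : ℂ :=
  let l := Classical.epsilon fun l : I → ℂ => Continuous l ∧ ∀ t, Complex.exp (l t) = γ t - z
  l 1 - l 0

lemma logVariation_eq {z x y c : ℂ} {γ : Path x y} {l : I → ℂ} (hl : Continuous l)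
    (h : ∀ t, Complex.exp (l t) = c * (γ t - z)) : logVariation z γ = l 1 - l 0 := by
  have hc : c ≠ 0 := fun hc => Complex.exp_ne_zero (l 0) (by rw [h, hc, zero_mul])
  obtain ⟨hm, hm'⟩ := Classical.epsilon_spec
    (p := fun l : I → ℂ => Continuous l ∧ ∀ t, Complex.exp (l t) = γ t - z)
    ⟨fun t => l t - Complex.log c, by fun_prop, fun t => by
      rw [Complex.exp_sub, Complex.exp_log hc, h, mul_div_cancel_left₀ _ hc]⟩
  exact (sub_eq_sub_of_exp_eq_mul_exp hl hm (fun t => by rw [h, hm']) 1 0).symm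

lemma exp_logVariation {z x y : ℂ} {γ : Path x y} (hz : z ∉ range γ) :
    Complex.exp (logVariation z γ) = (y - z) / (x - z) := by
  obtain ⟨l, hl, hexp⟩ := exists_continuous_exp_eq (f := fun t => γ t - z) (by fun_prop)
    fun t => sub_ne_zero.2 fun h => hz ⟨t, h⟩
  rw [logVariation_eq (c := 1) hl (by simpa using hexp), Complex.exp_sub, hexp, hexp, γ.target,
    γ.source]

-- Both sides are the increment from `(0, 0)` to `(1, 1)` of a logarithm of `γ' t - γ s` on the
-- unit square, along the two halves of the boundary.
lemma logVariation_add_logVariation {x y x' y' : ℂ} {γ : Path x y} {γ' : Path x' y'}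
    (h : Disjoint (range γ) (range γ')) :
    logVariation x γ' + logVariation y' γ = logVariation x' γ + logVariation y γ' := by
  obtain ⟨l, hl, hexp⟩ := exists_continuous_exp_eq (f := fun p : I × I => γ' p.2 - γ p.1)
    (by fun_prop) fun p => sub_ne_zero.2 fun h' =>
      h.ne_of_mem (mem_range_self p.1) (mem_range_self p.2) h'.symm
  have left : logVariation x γ' = l (0, 1) - l (0, 0) :=
    logVariation_eq (c := 1) (l := fun t => l (0, t)) (by fun_prop) (by simp [hexp])
  have top : logVariation y' γ = l (1, 1) - l (0, 1) :=
    logVariation_eq (c := -1) (l := fun s => l (s, 1)) (by fun_prop) (by simp [hexp])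
  have bottom : logVariation x' γ = l (1, 0) - l (0, 0) :=
    logVariation_eq (c := -1) (l := fun s => l (s, 0)) (by fun_prop) (by simp [hexp])
  have right : logVariation y γ' = l (1, 1) - l (1, 0) :=
    logVariation_eq (c := 1) (l := fun t => l (1, t)) (by fun_prop) (by simp [hexp])
  rw [left, top, bottom, right]
  ring

lemma exists_int_logVariation_sub {a a' b : ℂ} {γ : Path a b} {γ' : Path a' b}
    (ha : a ∉ range γ') (ha' : a' ∉ range γ) :
    ∃ n : ℤ, logVariation a γ' - logVariation a' γ =
      Complex.log (b - a) - Complex.log (b - a') + (2 * n + 1) * (π * Complex.I) := by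
  have hb : b - a ≠ 0 := sub_ne_zero.2 fun h => ha (h ▸ γ'.target_mem_range)
  have hb' : b - a' ≠ 0 := sub_ne_zero.2 fun h => ha' (h ▸ γ.target_mem_range)
  have haa' : a - a' ≠ 0 := sub_ne_zero.2 fun h => ha (h ▸ γ'.source_mem_range)
  have hexp : Complex.exp (logVariation a γ' - logVariation a' γ) =
      Complex.exp (Complex.log (b - a) - Complex.log (b - a') + π * Complex.I) := by
    rw [Complex.exp_sub, exp_logVariation ha, exp_logVariation ha', Complex.exp_add,
      Complex.exp_pi_mul_I, Complex.exp_sub, Complex.exp_log hb, Complex.exp_log hb']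
    rw [← neg_sub a a']
    field_simp
  obtain ⟨n, hn⟩ := Complex.exp_eq_exp_iff_exists_int.1 hexp
  exact ⟨n, by rw [hn]; ring⟩

/-- The turning of a star with three edges `γ j` from `a` to `b j`: the sum of the logarithmic
variations of the edges seen from the end points of the other edges. The correction term makes
the difference of the turnings of two stars with the same end points a multiple of `2πi`. -/
noncomputable def starTurning {a : ℂ} {b : Fin 3 → ℂ} (γ : ∀ j, Path a (b j)) : ℂ :=
  ∑ j, (logVariation (b (j + 1)) (γ j) + logVariation (b (j + 2)) (γ j)
    + 2 * Complex.log (b j - a))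

lemma exists_odd_starTurning_sub {a a' : ℂ} {b : Fin 3 → ℂ} {γ : ∀ j, Path a (b j)}
    {γ' : ∀ j, Path a' (b j)} (h : Pairwise fun j j' => Disjoint (range (γ j)) (range (γ' j'))) :
    ∃ n : ℤ, Odd n ∧ starTurning γ' - starTurning γ = n * (2 * π * Complex.I) := by
  have ha : ∀ j, a ∉ range (γ' j) := fun j =>
    (h (show j + 1 ≠ j by decide +revert)).notMem_of_mem_left (γ (j + 1)).source_mem_range
  have ha' : ∀ j, a' ∉ range (γ j) := fun j =>
    (h (show j ≠ j + 1 by decide +revert)).notMem_of_mem_right (γ' (j + 1)).source_mem_range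
  choose n hn using fun j => exists_int_logVariation_sub (ha j) (ha' j)
  have square : ∀ j j', j ≠ j' → logVariation a (γ' j') + logVariation (b j') (γ j) =
      logVariation a' (γ j) + logVariation (b j) (γ' j') := fun j j' hj =>
    logVariation_add_logVariation (h hj)
  refine ⟨2 * (n 0 + n 1 + n 2) + 3, by grind, ?_⟩
  simp only [starTurning, Fin.sum_univ_three]
  push_cast
  linear_combination 2 * (hn 0 + hn 1 + hn 2) - square 0 1 (by decide) - square 0 2 (by decide)
    - square 1 0 (by decide) - square 1 2 (by decide) - square 2 0 (by decide)
    - square 2 1 (by decide)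

theorem exists_crossing_of_K33_paths {a b : Fin 3 → ℂ} (γ : ∀ i j, Path (a i) (b j)) :
    ∃ i i' j j', i < i' ∧ j ≠ j' ∧ ¬ Disjoint (range (γ i j)) (range (γ i' j')) := by
  by_contra! h
  have hodd : ∀ i i', i < i' → ∃ n : ℤ, Odd n ∧
      starTurning (γ i') - starTurning (γ i) = n * (2 * π * Complex.I) := fun i i' hi =>
    exists_odd_starTurning_sub fun j j' hj => h i i' j j' hi hj
  obtain ⟨k, hk, hk'⟩ := hodd 0 1 (by decide)
  obtain ⟨l, hl, hl'⟩ := hodd 1 2 (by decide)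
  obtain ⟨m, hm, hm'⟩ := hodd 0 2 (by decide)
  have hsum : ((k + l : ℤ) : ℂ) = m := by
    apply mul_right_cancel₀ Complex.two_pi_I_ne_zero
    push_cast
    linear_combination hm' - hk' - hl'
  have : k + l = m := by exact_mod_cast hsum
  grind

end LogVariation

section Continua

lemma exists_pos_disjoint_thickening {E ι κ : Type*} [PseudoEMetricSpace E] [Finite ι] [Finite κ]
    {A : ι → Set E} {B : κ → Set E} {r : ι → κ → Prop} (hA : ∀ i, IsCompact (A i))
    (hB : ∀ k, IsClosed (B k)) (h : ∀ i k, r i k → Disjoint (A i) (B k)) :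
    ∃ ε > 0, ∀ i k, r i k → Disjoint (thickening ε (A i)) (thickening ε (B k)) := by
  suffices ∀ᶠ ε in 𝓝[>] (0 : ℝ), ∀ i k, r i k →
      Disjoint (thickening ε (A i)) (thickening ε (B k)) from
    (eventually_mem_nhdsWithin.and this).exists
  simp only [eventually_all]
  intro i k hik
  obtain ⟨δ, hδ, hd⟩ := (h i k hik).exists_thickenings (hA i) (hB k)
  filter_upwards [Ioo_mem_nhdsGT hδ] with ε hε
  exact hd.mono (thickening_mono hε.2.le _) (thickening_mono hε.2.le _)

lemma isPathConnected_thickening {E : Type*} [NormedAddCommGroup E] [NormedSpace ℝ E]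
    {C : Set E} (hC : IsConnected C) {ε : ℝ} (hε : 0 < ε) : IsPathConnected (thickening ε C) := by
  rw [← isOpen_thickening.isConnected_iff_isPathConnected, ← add_ball_zero,
    ← add_image_prod]
  exact (hC.prod (isConnected_ball hε)).image _ continuous_add.continuousOn

lemma joinedIn_compl_of_mem_closure {E : Type*} [TopologicalSpace E] [LocallyPathConnectedSpace E]
    {U F : Set E} (hU : IsOpen U) (hU' : IsConnected U) (hF : IsClosed F) (hUF : Disjoint U F)
    {p c : E} (hp : p ∈ U) (hc : c ∈ closure U) (hcF : c ∉ F) : JoinedIn Fᶜ p c := by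
  obtain ⟨u, hu, huU⟩ := mem_closure_iff_nhds.1 hc _
    (pathComponentIn_mem_nhds (hF.isOpen_compl.mem_nhds hcF))
  have hpu : JoinedIn U p u := (hU.isConnected_iff_isPathConnected.1 hU').joinedIn p hp u huU
  exact (hpu.mono hUF.subset_compl_right).trans (JoinedIn.symm hu)

lemma exists_disjoint_Ico_Ioc {α : Type*} [LinearOrder α] [TopologicalSpace α]
    [OrderClosedTopology α] [CompactSpace α] {A B : Set α} (hA : IsClosed A) (hB : IsClosed B)
    {s t : α} (hs : s ∈ A) (ht : t ∈ B) (hst : s ≤ t) :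
    ∃ s' ∈ A, ∃ t' ∈ B, s' ≤ t' ∧ Disjoint (Ico s' t') B ∧ Disjoint (Ioc s' t') A := by
  obtain ⟨t', ⟨ht'B, hst'⟩, hmin⟩ :=
    (hB.inter (isClosed_Ici (a := s))).isCompact.exists_isLeast ⟨t, ht, hst⟩
  obtain ⟨s', ⟨hs'A, hs't'⟩, hmax⟩ :=
    (hA.inter (isClosed_Iic (a := t'))).isCompact.exists_isGreatest ⟨s, hs, hst'⟩
  refine ⟨s', hs'A, t', ht'B, hs't', disjoint_left.2 fun u hu huB => ?_,
    disjoint_left.2 fun u hu huA => ?_⟩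
  · exact hu.2.not_ge (hmin ⟨huB, (hmax ⟨hs, hst'⟩).trans hu.1⟩)
  · exact hu.1.not_ge (hmax ⟨huA, hu.2⟩)

lemma exists_joinedIn_range_sdiff {E : Type*} [TopologicalSpace E] {K L V W : Set E}
    (hK : IsClosed K) (hL : IsClosed L) (hV : IsOpen V) (hW : IsOpen W) (hKV : K ⊆ V) (hLW : L ⊆ W)
    (hVW : Disjoint V W) {x y : E} (γ : Path x y) (hx : x ∈ K) (hy : y ∈ L) :
    ∃ z ∉ V ∪ W, (∃ x' ∈ K, JoinedIn (range γ \ L) z x') ∧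
      ∃ y' ∈ L, JoinedIn (range γ \ K) z y' := by
  obtain ⟨s, hs, t, ht, hst, hdL, hdK⟩ := exists_disjoint_Ico_Ioc (hK.preimage γ.continuous)
    (hL.preimage γ.continuous) (s := 0) (t := 1) (by simpa) (by simpa) zero_le_one
  obtain ⟨u, hu, huVW⟩ : ∃ u ∈ Icc s t, γ u ∉ V ∪ W := by
    by_contra! hsub
    obtain ⟨z, -, hz⟩ := (isPreconnected_Icc.image γ γ.continuous.continuousOn) V W hV hW
      (image_subset_iff.2 hsub) ⟨γ s, ⟨s, left_mem_Icc.2 hst, rfl⟩, hKV hs⟩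
      ⟨γ t, ⟨t, right_mem_Icc.2 hst, rfl⟩, hLW ht⟩
    exact hVW.ne_of_mem hz.1 hz.2 rfl
  have hsu : s < u := hu.1.lt_of_ne fun h => huVW (h ▸ .inl (hKV hs))
  have hut : u < t := hu.2.lt_of_ne fun h => huVW (h ▸ .inr (hLW ht))
  refine ⟨γ u, huVW, ⟨γ s, hs, γ.subpath u s, fun v => ?_⟩, γ t, ht, γ.subpath u t, fun v => ?_⟩
  · obtain ⟨w, hw, hwv⟩ := γ.range_subpath_of_ge u s hsu.le ▸ mem_range_self v
    exact hwv ▸ ⟨mem_range_self w, fun h => hdL.ne_of_mem ⟨hw.1, hw.2.trans_lt hut⟩ h rfl⟩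
  · obtain ⟨w, hw, hwv⟩ := γ.range_subpath_of_le u t hut.le ▸ mem_range_self v
    exact hwv ▸ ⟨mem_range_self w, fun h => hdK.ne_of_mem ⟨hsu.trans_le hw.1, hw.2⟩ h rfl⟩

lemma exists_frequently_of_forall_mem_thickening {E : Type*} [PseudoEMetricSpace E] {C : Set E}
    (hC : IsCompact C) {p : ℝ → E → Prop} (hp : Monotone p)
    (h : ∀ ε > 0, ∃ z ∈ thickening ε C, p ε z) : ∃ c ∈ C, ∀ ε > 0, ∃ᶠ z in 𝓝 c, p ε z := by
  by_contra! hne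
  have hbasis : (⨅ ε > (0 : ℝ), 𝓟 {z | p ε z}).HasBasis (0 < ·) fun ε => {z | p ε z} :=
    hasBasis_biInf_principal' (fun ε hε δ hδ => ⟨min ε δ, lt_min hε hδ,
      fun z => hp (min_le_left ε δ) z, fun z => hp (min_le_right ε δ) z⟩) ⟨1, one_pos⟩
  have hdisj : Disjoint (𝓝ˢ C) (⨅ ε > (0 : ℝ), 𝓟 {z | p ε z}) :=
    hC.disjoint_nhdsSet_left.2 fun c hc =>
      let ⟨_, hε, hc⟩ := hne c hc
      disjoint_of_disjoint_of_mem disjoint_compl_left hc (hbasis.mem_of_mem hε)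
  obtain ⟨δ, hδ, ε, hε, hdisj⟩ := ((hasBasis_nhdsSet_thickening hC).disjoint_iff hbasis).1 hdisj
  obtain ⟨z, hzC, hz⟩ := h (min δ ε) (lt_min hδ hε)
  exact hdisj.ne_of_mem (thickening_mono (min_le_left δ ε) C hzC) (hp (min_le_right δ ε) z hz) rfl

-- Each thickening contains a point off `V ∪ W` from which both sets can be reached; these points
-- accumulate at some `c ∈ C`, which is off `V ∪ W` too and hence can be joined to those near it.
theorem exists_forall_joinedIn_thickening_sdiff {E : Type*} [NormedAddCommGroup E]
    [NormedSpace ℝ E] {C K L : Set E} (hC : IsCompact C) (hC' : IsConnected C) (hK : IsClosed K)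
    (hL : IsClosed L) (hKL : Disjoint K L) (hKC : (K ∩ C).Nonempty) (hLC : (L ∩ C).Nonempty) :
    ∃ c ∈ C, ∀ ε > 0, (∃ x ∈ K, JoinedIn (thickening ε C \ L) c x) ∧
      ∃ y ∈ L, JoinedIn (thickening ε C \ K) c y := by
  obtain ⟨V, W, hV, hW, hKV, hLW, hVW⟩ := normal_separation hK hL hKL
  obtain ⟨x, hxK, hxC⟩ := hKC
  obtain ⟨y, hyL, hyC⟩ := hLC
  let p (ε : ℝ) (z : E) : Prop := z ∉ V ∪ W ∧ (∃ x ∈ K, JoinedIn (thickening ε C \ L) z x) ∧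
    ∃ y ∈ L, JoinedIn (thickening ε C \ K) z y
  have hp : Monotone p := fun ε δ hεδ z ⟨hz, ⟨x, hx, hzx⟩, y, hy, hzy⟩ =>
    have hmono := thickening_mono hεδ C
    ⟨hz, ⟨x, hx, hzx.mono (sdiff_subset_sdiff_left hmono)⟩, y, hy,
      hzy.mono (sdiff_subset_sdiff_left hmono)⟩
  obtain ⟨c, hcC, hc⟩ := exists_frequently_of_forall_mem_thickening hC hp fun ε hε => by
    obtain ⟨γ, hγ⟩ := (isPathConnected_thickening hC' hε).joinedIn x
      (self_subset_thickening hε C hxC) y (self_subset_thickening hε C hyC)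
    obtain ⟨z, hz, ⟨x', hx', hzx'⟩, y', hy', hzy'⟩ :=
      exists_joinedIn_range_sdiff hK hL hV hW hKV hLW hVW γ hxK hyL
    have hmono := range_subset_iff.2 hγ
    exact ⟨z, hmono hzx'.source_mem.1, hz, ⟨x', hx', hzx'.mono (sdiff_subset_sdiff_left hmono)⟩,
      y', hy', hzy'.mono (sdiff_subset_sdiff_left hmono)⟩
  have hcVW : c ∉ V ∪ W := fun hcVW =>
    hc 1 one_pos (mem_of_superset ((hV.union hW).mem_nhds hcVW) fun z hz hpz => hpz.1 hz)
  have hcK : c ∉ K := fun h => hcVW (.inl (hKV h))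
  have hcL : c ∉ L := fun h => hcVW (.inr (hLW h))
  refine ⟨c, hcC, fun ε hε => ?_⟩
  have hO : thickening ε C \ (K ∪ L) ∈ 𝓝 c :=
    (isOpen_thickening.sdiff (hK.union hL)).mem_nhds
      ⟨self_subset_thickening hε C hcC, fun h => h.elim hcK hcL⟩
  obtain ⟨z, ⟨-, ⟨x', hx', hzx'⟩, y', hy', hzy'⟩, hcz⟩ :=
    ((hc ε hε).and_eventually (pathComponentIn_mem_nhds hO)).exists
  have hcz : JoinedIn (thickening ε C \ (K ∪ L)) c z := hcz
  exact ⟨⟨x', hx', (hcz.mono (sdiff_subset_sdiff_right subset_union_right)).trans hzx'⟩,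
    y', hy', (hcz.mono (sdiff_subset_sdiff_right subset_union_left)).trans hzy'⟩

end Continua

section Theta

/-- The continua `G j` are the edges of a drawing of the star with centre `a` and leaves `b j`. -/
def IsStar {E ι : Type*} [MetricSpace E] (a : E) (b : ι → E) (G : ι → Set E) : Prop :=
  ∀ j, SubcontIn univ (G j) ∧ a ∈ G j ∧ b j ∈ G j

lemma exists_isStar_of_joinedIn {E ι : Type*} [MetricSpace E] {a : E} {b : ι → E}
    {S : ι → Set E} (h : ∀ j, JoinedIn (S j) a (b j)) : ∃ G, IsStar a b G ∧ ∀ j, G j ⊆ S j :=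
  ⟨fun j => range (h j).somePath, fun j => ⟨⟨subset_univ _,
    isCompact_range (h j).somePath.continuous, isConnected_range (h j).somePath.continuous⟩,
    (h j).somePath.source_mem_range, (h j).somePath.target_mem_range⟩,
    fun j => range_subset_iff.2 (h j).somePath_mem⟩

lemma exists_isStar_subset_union {E ι : Type*} [MetricSpace E] {K : Set E} (hK : IsCompact K)
    (hK' : IsConnected K) {b : ι → E} {S : ι → Set E}
    (h : ∀ j, ∃ x ∈ K, JoinedIn (S j) (b j) x) :
    ∃ a G, IsStar a b G ∧ ∀ j, G j ⊆ K ∪ S j := by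
  obtain ⟨a, ha⟩ := hK'.nonempty
  choose x hxK γ hγ using h
  refine ⟨a, fun j => K ∪ range (γ j), fun j => ⟨⟨subset_univ _, ?_, ?_⟩, .inl ha,
    .inr (γ j).source_mem_range⟩, fun j => union_subset_union_right K (range_subset_iff.2 (hγ j))⟩
  · exact hK.union (isCompact_range (γ j).continuous)
  · exact hK'.union ⟨x j, hxK j, (γ j).target_mem_range⟩ (isConnected_range (γ j).continuous)

theorem exists_crossing_of_isStar {a b : Fin 3 → ℂ} {G : Fin 3 → Fin 3 → Set ℂ}
    (hG : ∀ i, IsStar (a i) b (G i)) :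
    ∃ i i', i < i' ∧ ∃ j j', j ≠ j' ∧ ¬ Disjoint (G i j) (G i' j') := by
  by_contra! h
  obtain ⟨δ, hδ, hdisj⟩ := exists_pos_disjoint_thickening
    (A := fun e : Fin 3 × Fin 3 => G e.1 e.2) (B := fun e : Fin 3 × Fin 3 => G e.1 e.2)
    (r := fun e e' => e.1 < e'.1 ∧ e.2 ≠ e'.2) (fun e => (hG e.1 e.2).1.2.1)
    (fun e => (hG e.1 e.2).1.2.1.isClosed) fun e e' he => h _ _ he.1 _ _ he.2
  choose γ hγ using fun i j => (isPathConnected_thickening (hG i j).1.2.2 hδ).joinedIn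
    (a i) (self_subset_thickening hδ _ (hG i j).2.1)
    (b j) (self_subset_thickening hδ _ (hG i j).2.2)
  obtain ⟨i, i', j, j', hi, hj, hcross⟩ := exists_crossing_of_K33_paths γ
  exact hcross ((hdisj (i, j) (i', j') ⟨hi, hj⟩).mono (range_subset_iff.2 (hγ i j))
    (range_subset_iff.2 (hγ i' j')))

lemma exists_not_disjoint_of_joinedIn_sdiff {K L : Set ℂ} (hK : IsCompact K) (hK' : IsConnected K)
    (hL : IsCompact L) (hL' : IsConnected L) (hKL : Disjoint K L) {N : Fin 3 → Set ℂ}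
    (hN : Pairwise (Disjoint on N)) {c : Fin 3 → ℂ} (hcK : ∀ j, ∃ x ∈ K, JoinedIn (N j \ L) (c j) x)
    (hcL : ∀ j, ∃ y ∈ L, JoinedIn (N j \ K) (c j) y) {p : ℂ} {Q : Fin 3 → Set ℂ}
    (hQ : IsStar p c Q) : ∃ j, ¬ Disjoint (Q j) (K ∪ L ∪ ⋃ j' ≠ j, N j') := by
  by_contra! hQd
  simp only [disjoint_union_right, disjoint_iUnion_right] at hQd
  obtain ⟨x, G, hG, hGK⟩ := exists_isStar_subset_union hK hK' hcK
  obtain ⟨y, H, hH, hHL⟩ := exists_isStar_subset_union hL hL' hcL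
  have hQN : ∀ j j', j ≠ j' → Disjoint (N j) (Q j') := fun j j' hj => ((hQd j').2 j hj).symm
  have hGH : ∀ j j', j ≠ j' → Disjoint (G j) (H j') := fun j j' hj => by
    refine .mono (hGK j) (hHL j') ?_
    simp only [disjoint_union_left, disjoint_union_right]
    exact ⟨⟨hKL, disjoint_sdiff_left⟩, disjoint_sdiff_right,
      (hN hj).mono sdiff_subset sdiff_subset⟩
  have hGQ : ∀ j j', j ≠ j' → Disjoint (G j) (Q j') := fun j j' hj =>
    .mono_left (hGK j) (disjoint_union_left.2
      ⟨(hQd j').1.1.symm, (hQN j j' hj).mono_left sdiff_subset⟩)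
  have hHQ : ∀ j j', j ≠ j' → Disjoint (H j) (Q j') := fun j j' hj =>
    .mono_left (hHL j) (disjoint_union_left.2
      ⟨(hQd j').1.2.symm, (hQN j j' hj).mono_left sdiff_subset⟩)
  obtain ⟨i, i', hi, j, j', hj, hcross⟩ := exists_crossing_of_isStar (a := ![x, y, p]) (b := c)
    (G := ![G, H, Q]) (by simp [Fin.forall_fin_succ, hG, hH, hQ])
  obtain ⟨rfl, rfl⟩ | ⟨rfl, rfl⟩ | ⟨rfl, rfl⟩ :
      (i = 0 ∧ i' = 1) ∨ (i = 0 ∧ i' = 2) ∨ (i = 1 ∧ i' = 2) := by lia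
  exacts [hcross (hGH j j' hj), hcross (hGQ j j' hj), hcross (hHQ j j' hj)]

theorem exists_forall_isStar_not_disjoint_of_theta {K L : Set ℂ} {C : Fin 3 → Set ℂ}
    (hK : IsCompact K) (hK' : IsConnected K) (hL : IsCompact L) (hL' : IsConnected L)
    (hC : ∀ j, IsCompact (C j)) (hC' : ∀ j, IsConnected (C j)) (hKL : Disjoint K L)
    (hCC : Pairwise (Disjoint on C)) (hKC : ∀ j, (K ∩ C j).Nonempty)
    (hLC : ∀ j, (L ∩ C j).Nonempty) :
    ∃ c : Fin 3 → ℂ, (∀ j, c j ∈ C j \ (K ∪ L)) ∧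
      ∀ p Q, IsStar p c Q → ∃ j, ¬ Disjoint (Q j) (K ∪ L ∪ ⋃ j' ≠ j, C j') := by
  choose c hcC hc using fun j => exists_forall_joinedIn_thickening_sdiff (hC j) (hC' j)
    hK.isClosed hL.isClosed hKL (hKC j) (hLC j)
  refine ⟨c, fun j => ⟨hcC j, ?_⟩, fun p Q hQ => ?_⟩
  · obtain ⟨⟨x, -, hx⟩, y, -, hy⟩ := hc j 1 one_pos
    exact fun h => h.elim hy.source_mem.2 hx.source_mem.2
  by_contra! hQd
  simp only [disjoint_union_right, disjoint_iUnion_right] at hQd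
  obtain ⟨ε, hε, hdisj⟩ := exists_pos_disjoint_thickening (r := (· ≠ ·)) hC
    (B := fun j => C j ∪ Q j) (fun j => (hC j).isClosed.union (hQ j).1.2.1.isClosed)
    fun j j' hj => disjoint_union_right.2 ⟨hCC hj, ((hQd j').2 j hj).symm⟩
  have hN : Pairwise (Disjoint on fun j => thickening ε (C j)) := fun j j' hj =>
    (hdisj j j' hj).mono_right (thickening_subset_of_subset ε subset_union_left)
  obtain ⟨j, hj⟩ := exists_not_disjoint_of_joinedIn_sdiff hK hK' hL hL' hKL hN
    (fun j => (hc j ε hε).1) (fun j => (hc j ε hε).2) hQ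
  refine hj (disjoint_union_right.2 ⟨disjoint_union_right.2 (hQd j).1, ?_⟩)
  exact disjoint_iUnion₂_right.2 fun j' hj' => ((hdisj j' j hj').mono_right
    (subset_union_right.trans (self_subset_thickening hε _))).symm

theorem exists_not_subset_closure_of_theta {X K L U : Set ℂ} {C : Fin 3 → Set ℂ}
    (hK : SubcontIn X K) (hL : SubcontIn X L) (hC : ∀ j, SubcontIn X (C j)) (hKL : Disjoint K L)
    (hCC : Pairwise (Disjoint on C)) (hKC : ∀ j, (K ∩ C j).Nonempty)
    (hLC : ∀ j, (L ∩ C j).Nonempty) (hU : IsOpen U) (hU' : IsConnected U) (hUX : Disjoint U X) :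
    ∃ j, ¬ C j ⊆ closure U := by
  by_contra! hCU
  obtain ⟨c, hc, hstar⟩ := exists_forall_isStar_not_disjoint_of_theta hK.2.1 hK.2.2 hL.2.1 hL.2.2
    (fun j => (hC j).2.1) (fun j => (hC j).2.2) hKL hCC hKC hLC
  obtain ⟨p, hp⟩ := hU'.nonempty
  have hjoin : ∀ j, JoinedIn (K ∪ L ∪ ⋃ j' ≠ j, C j')ᶜ p (c j) := fun j => by
    refine joinedIn_compl_of_mem_closure hU hU' ?_ (hUX.mono_right ?_) hp (hCU j (hc j).1) ?_
    · exact (hK.2.1.isClosed.union hL.2.1.isClosed).union <| isClosed_iUnion_of_finite fun j' =>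
        isClosed_iUnion_of_finite fun _ => (hC j').2.1.isClosed
    · exact union_subset (union_subset hK.1 hL.1) (iUnion₂_subset fun j' _ => (hC j').1)
    · rintro (h | h)
      · exact (hc j).2 h
      · obtain ⟨j', hj', h⟩ := mem_iUnion₂.1 h
        exact (hCC hj').ne_of_mem h (hc j).1 rfl
  obtain ⟨Q, hQ, hQF⟩ := exists_isStar_of_joinedIn hjoin
  obtain ⟨j, hj⟩ := hstar p Q hQ
  exact hj (disjoint_compl_left.mono_left (hQF j))

end Theta

section Unbounded

lemma isConnected_compl_closedBall {E : Type*} [NormedAddCommGroup E] [NormedSpace ℝ E]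
    (h : 1 < Module.rank ℝ E) (x : E) {r : ℝ} (hr : 0 ≤ r) : IsConnected (closedBall x r)ᶜ := by
  have himage : (closedBall x r)ᶜ = (fun p : ℝ × E => x + p.1 • p.2) '' Ioi r ×ˢ sphere 0 1 := by
    ext z
    simp only [mem_compl_iff, mem_closedBall, not_le, mem_image, mem_prod, Prod.exists, mem_Ioi,
      mem_sphere_zero_iff_norm, dist_eq_norm]
    constructor
    · intro hz
      have hz0 : ‖z - x‖ ≠ 0 := (hr.trans_lt hz).ne'
      refine ⟨‖z - x‖, ‖z - x‖⁻¹ • (z - x), ⟨hz, ?_⟩, ?_⟩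
      · rw [norm_smul, norm_inv, norm_norm, inv_mul_cancel₀ hz0]
      · rw [smul_inv_smul₀ hz0, add_sub_cancel]
    · rintro ⟨t, v, ⟨ht, hv⟩, rfl⟩
      rwa [add_sub_cancel_left, norm_smul, hv, mul_one, Real.norm_of_nonneg (hr.trans ht.le)]
  rw [himage]
  exact (isConnected_Ioi.prod (isConnected_sphere h 0 zero_le_one)).image _ (by fun_prop)

lemma exists_not_isBounded_connectedComponentIn_compl {E : Type*} [NormedAddCommGroup E]
    [NormedSpace ℝ E] (h : 1 < Module.rank ℝ E) {X : Set E} (hX : Bornology.IsBounded X) :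
    ∃ z ∉ X, ¬ Bornology.IsBounded (connectedComponentIn Xᶜ z) := by
  have : Nontrivial E := (rank_pos_iff_nontrivial (R := ℝ)).1 (zero_lt_one.trans h)
  obtain ⟨R, hR, hXR⟩ := hX.subset_closedBall_lt 0 0
  have hconn := isConnected_compl_closedBall h 0 hR.le
  have hsub : (closedBall 0 R)ᶜ ⊆ Xᶜ := compl_subset_compl.2 hXR
  obtain ⟨z, hz⟩ := hconn.nonempty
  refine ⟨z, hsub hz, fun hb => ?_⟩
  have hcompl : Bornology.IsBounded (closedBall (0 : E) R)ᶜ :=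
    hb.subset (hconn.isPreconnected.subset_connectedComponentIn hz hsub)
  exact NormedSpace.unbounded_univ ℝ E
    (union_compl_self (closedBall (0 : E) R) ▸ isBounded_closedBall.union hcompl)

end Unbounded

/-- a planar compactum containing two disjoint subcontinua each meeting three
pairwise disjoint subcontinua is not unshielded (a generalized `θ`-curve argument). -/
theorem theta_not_unshielded
    (X : Set ℂ) (hX : IsCompact X)
    (X1 X2 C1 C2 C3 : Set ℂ)
    (hX1 : SubcontIn X X1) (hX2 : SubcontIn X X2)
    (hX12 : Disjoint X1 X2)
    (hC1 : SubcontIn X C1) (hC2 : SubcontIn X C2) (hC3 : SubcontIn X C3)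
    (hC12 : Disjoint C1 C2) (hC13 : Disjoint C1 C3) (hC23 : Disjoint C2 C3)
    (h11 : (X1 ∩ C1).Nonempty) (h12 : (X1 ∩ C2).Nonempty) (h13 : (X1 ∩ C3).Nonempty)
    (h21 : (X2 ∩ C1).Nonempty) (h22 : (X2 ∩ C2).Nonempty) (h23 : (X2 ∩ C3).Nonempty) :
    ¬ Unshielded X := by
  intro hun
  obtain ⟨z, hz, hunb⟩ := exists_not_isBounded_connectedComponentIn_compl
    (Complex.rank_real_complex ▸ Nat.one_lt_ofNat) hX.isBounded
  let U := connectedComponentIn Xᶜ z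
  have hUX : Disjoint U X := subset_compl_iff_disjoint_right.1 (connectedComponentIn_subset _ _)
  have hXU : X ⊆ closure U := (hun z hz hunb).subset.trans frontier_subset_closure
  have hC : ∀ j, SubcontIn X (![C1, C2, C3] j) := by simp [Fin.forall_fin_succ, hC1, hC2, hC3]
  obtain ⟨j, hj⟩ := exists_not_subset_closure_of_theta hX1 hX2 hC hX12
    (by simp [Pairwise, Fin.forall_fin_succ, onFun, hC12, hC13, hC23, hC12.symm, hC13.symm,
      hC23.symm])
    (by simp [Fin.forall_fin_succ, h11, h12, h13]) (by simp [Fin.forall_fin_succ, h21, h22, h23])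
    hX.isClosed.isOpen_compl.connectedComponentIn (isConnected_connectedComponentIn_iff.2 hz) hUX
  exact hj ((hC j).1.trans hXU)
end

section
/- Let X ⊂ ℂ be an unshielded compactum and FS∼ the finest closed equivalence relation respecting the family of limit continua of X. Then the quotient map m_X : X → X/FS∼ is the finest finitely Suslinian monotone model of X: X/FS∼ is finitely Suslinian, m_X is monotone, and every monotone continuous surjection φ from X onto a finitely Suslinian compactum factors as φ = g ∘ m_X for some continuous map g. -/
open Set Filter Metric Topology Function

/-!
Suppose three pairwise disjoint subcontinua of an unshielded compactum `X` all met two disjoint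
subcontinua `A₁` and `A₂`. Every point of `X` is a limit of the unbounded complementary domain, so
this domain contains a continuum `M` passing close to all points of `X`. With `A₁`, `A₂`, `M` as
one colour class and points equidistant from `A₁` and `A₂` on the three subcontinua as the other,
thickening gives a planar drawing of `K₃,₃`. No such drawing exists: the logarithm increments of the
differences of points on two disjoint paths satisfy a reciprocity law, and for a drawing of `K₃,₃`
these laws combine to `-1 = 1`.

Let `φ` be a monotone map of `X` onto a finitely Suslinian space, and suppose that `φ` separates
two points of a limit continuum. The images of the approximating continua run through large
components of disjoint balls around the two values, and each ball has finitely many of these. So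
infinitely many of the approximating continua meet the preimages of the same two disjoint continua,
a contradiction. Hence `φ` collapses limit continua and factors through `m`.

Fibers of `m` are connected because the components of the classes of a closed equivalence relation
form a closed equivalence relation. Disjoint continua of large diameter in `Y` pull back to disjoint
continua accumulating on a limit continuum, which `m` collapses, so `Y` is finitely Suslinian.
-/

open scoped unitInterval

/-! ### Logarithm increments and the graph `K₃,₃` -/

theorem sub_eq_sub_of_exp_eq {A : Type*} [TopologicalSpace A] [PreconnectedSpace A] {F G : A → ℂ}
    (hF : Continuous F) (hG : Continuous G) (h : ∀ x, Complex.exp (F x) = Complex.exp (G x))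
    (x y : A) : F x - F y = G x - G y := by
  have key : F = fun z => G z + (F y - G y) := by
    refine Complex.isCoveringMap_exp.eq_of_comp_eq hF (by fun_prop) (funext fun z => ?_) y
      (by ring)
    exact Subtype.ext (by simp [Complex.exp_add, Complex.exp_sub, h])
  linear_combination congrFun key x

theorem exists_continuous_log {A : Type*} [TopologicalSpace A] [SimplyConnectedSpace A]
    [LocallyPathConnectedSpace A] {f : A → ℂ} (hf : Continuous f) (h0 : ∀ x, f x ≠ 0) :
    ∃ F : A → ℂ, Continuous F ∧ ∀ x, Complex.exp (F x) = f x := by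
  obtain ⟨a⟩ : Nonempty A := inferInstance
  obtain ⟨F, ⟨-, hF⟩, -⟩ := Complex.isCoveringMapOn_exp.existsUnique_continuousMap_lifts
    ⟨f, hf⟩ (a₀ := a) (Complex.exp_log (h0 a)) h0
  exact ⟨F, F.continuous, fun x => congrFun hF x⟩

open Classical in
/-- The total change along the unit interval of a continuous logarithm of `g`; it is `0` by
convention when `g` has no continuous logarithm. -/
noncomputable def logIncrement (g : I → ℂ) : ℂ :=
  if h : ∃ F : I → ℂ, Continuous F ∧ ∀ t, Complex.exp (F t) = g t then
    h.choose 1 - h.choose 0 else 0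

theorem logIncrement_eq {g F : I → ℂ} (hF : Continuous F) (h : ∀ t, Complex.exp (F t) = g t) :
    logIncrement g = F 1 - F 0 := by
  have hex : ∃ F : I → ℂ, Continuous F ∧ ∀ t, Complex.exp (F t) = g t := ⟨F, hF, h⟩
  rw [logIncrement, dif_pos hex]
  exact sub_eq_sub_of_exp_eq hex.choose_spec.1 hF (fun t => by rw [hex.choose_spec.2, h]) _ _

theorem exists_continuous_log_sub {P Q P' Q' : ℂ} (e : Path P Q) (e' : Path P' Q')
    (h : Disjoint (range e) (range e')) :
    ∃ F : I × I → ℂ, Continuous F ∧ ∀ p, Complex.exp (F p) = e p.1 - e' p.2 := by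
  have : ContractibleSpace I := (convex_Icc 0 1).contractibleSpace (nonempty_Icc.2 zero_le_one)
  have : LocallyPathConnectedSpace I := (convex_Icc 0 1).locallyPathConnectedSpace
  exact exists_continuous_log (by fun_prop) fun p hp =>
    Set.disjoint_left.1 h (mem_range_self p.1) (sub_eq_zero.1 hp ▸ mem_range_self p.2)

-- Both sides equal the alternating sum, over the corners of the square, of a logarithm of
-- `e s - e' t`.
theorem logIncrement_sub_logIncrement {P Q P' Q' : ℂ} (e : Path P Q) (e' : Path P' Q')
    (h : Disjoint (range e) (range e')) :
    logIncrement (fun t => e t - Q') - logIncrement (fun t => e t - P') =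
      logIncrement (fun t => e' t - Q) - logIncrement (fun t => e' t - P) := by
  obtain ⟨F, hF, hexp⟩ := exists_continuous_log_sub e e' h
  have horiz (t : I) : Continuous fun s => F (s, t) := hF.comp (by fun_prop)
  have vert (s : I) : Continuous fun t => F (s, t) := hF.comp (by fun_prop)
  have hexp_neg (s t : I) : Complex.exp (F (s, t) + Real.pi * Complex.I) = e' t - e s := by
    rw [Complex.exp_add, hexp, Complex.exp_pi_mul_I]
    ring
  rw [logIncrement_eq (horiz 1) fun s => by rw [hexp, e'.target],
    logIncrement_eq (horiz 0) fun s => by rw [hexp, e'.source],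
    logIncrement_eq ((vert 1).add_const _) fun t => by rw [hexp_neg, e.target],
    logIncrement_eq ((vert 0).add_const _) fun t => by rw [hexp_neg, e.source]]
  ring

theorem exp_logIncrement_sub {P Q v : ℂ} (e : Path P Q) (hv : v ∉ range e) :
    Complex.exp (logIncrement fun t => e t - v) = (Q - v) / (P - v) := by
  obtain ⟨F, hF, hexp⟩ := exists_continuous_log_sub e (Path.refl v) (by simpa using hv)
  rw [logIncrement_eq (F := fun s => F (s, 0)) (by fun_prop) fun s => by simp [hexp],
    Complex.exp_sub, hexp, hexp]
  simp

-- For each `i`, let `D i` be the alternating sum over the six pairs `j ≠ l` of the logarithm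
-- increments of `e i j - b l`. The reciprocity law makes `D` antisymmetric in any two distinct
-- indices, so `D` vanishes as there are three of them; but `exp (D 0) = (-1) ^ 3`.
theorem not_planar_K33 {a b : Fin 3 → ℂ} (e : ∀ i j, Path (a i) (b j))
    (h : ∀ i j k l, i < k → j ≠ l → Disjoint (range (e i j)) (range (e k l))) : False := by
  let N (i j l : Fin 3) : ℂ := logIncrement fun t => e i j t - b l
  let D (i : Fin 3) : ℂ := N i 0 1 - N i 1 0 + (N i 1 2 - N i 2 1) + (N i 2 0 - N i 0 2)
  have hD {i k : Fin 3} (hik : i < k) : D i + D k = 0 := by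
    have recip (j l : Fin 3) (hjl : j ≠ l) :=
      logIncrement_sub_logIncrement (e i j) (e k l) (h i j k l hik hjl)
    linear_combination recip 0 1 (by decide) - recip 1 0 (by decide) + recip 1 2 (by decide) -
      recip 2 1 (by decide) + recip 2 0 (by decide) - recip 0 2 (by decide)
  have hD_zero : D 0 = 0 := by
    linear_combination (hD (i := 0) (k := 1) (by decide) + hD (i := 0) (k := 2) (by decide) -
      hD (i := 1) (k := 2) (by decide)) / 2
  have hb (j l : Fin 3) (hjl : j ≠ l) : b l ∉ range (e 0 j) := fun hl =>
    Set.disjoint_left.1 (h 0 j 1 l (by decide) hjl) hl ⟨1, (e 1 l).target⟩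
  have hbb (j l : Fin 3) (hjl : j ≠ l) : b j - b l ≠ 0 := fun h' =>
    hb j l hjl ⟨1, by rw [(e 0 j).target, sub_eq_zero.1 h']⟩
  have hab (l : Fin 3) : a 0 - b l ≠ 0 := fun h' =>
    hb (l + 1) l (by simp) ⟨0, by rw [(e 0 (l + 1)).source, sub_eq_zero.1 h']⟩
  have hN (j l : Fin 3) (hjl : j ≠ l) : Complex.exp (N 0 j l) = (b j - b l) / (a 0 - b l) :=
    exp_logIncrement_sub (e 0 j) (hb j l hjl)
  have key : Complex.exp (D 0) = -1 := by
    simp only [D, Complex.exp_add, Complex.exp_sub]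
    rw [hN 0 1 (by decide), hN 1 0 (by decide), hN 1 2 (by decide), hN 2 1 (by decide),
      hN 2 0 (by decide), hN 0 2 (by decide)]
    have := hab 0; have := hab 1; have := hab 2
    have := hbb 0 1 (by decide); have := hbb 1 2 (by decide); have := hbb 2 0 (by decide)
    have := hbb 1 0 (by decide); have := hbb 2 1 (by decide); have := hbb 0 2 (by decide)
    field_simp
    ring
  rw [hD_zero, Complex.exp_zero] at key
  norm_num at key

theorem joinedIn_of_isPreconnected_subset {E : Type*} [TopologicalSpace E]
    [LocallyPathConnectedSpace E] {U K : Set E} (hU : IsOpen U) (hK : IsPreconnected K)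
    (hKU : K ⊆ U) {x y : E} (hx : x ∈ K) (hy : y ∈ K) : JoinedIn U x y := by
  have hpath := hU.connectedComponentIn.isConnected_iff_isPathConnected.1
    (isConnected_connectedComponentIn_iff.2 (hKU hx))
  exact (hpath.joinedIn x (mem_connectedComponentIn (hKU hx)) y
    (hK.subset_connectedComponentIn hx hKU hy)).mono (connectedComponentIn_subset U x)

theorem eventually_disjoint_thickening {E : Type*} [PseudoMetricSpace E] {s t : Set E}
    (hs : IsCompact s) (ht : IsClosed t) (h : Disjoint s t) :
    ∀ᶠ r : ℝ in 𝓝[>] 0, Disjoint (thickening r s) (thickening r t) := by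
  obtain ⟨δ, hδ, hd⟩ := h.exists_thickenings hs ht
  filter_upwards [Ioo_mem_nhdsGT hδ] with r hr
  exact hd.mono (thickening_mono hr.2.le _) (thickening_mono hr.2.le _)

theorem eventually_forall_disjoint_thickening {ι E : Type*} [Finite ι] [PseudoMetricSpace E]
    {p : ι → ι → Prop} {S : ι → Set E} (hc : ∀ i, IsCompact (S i)) (hcl : ∀ i, IsClosed (S i))
    (h : ∀ i j, p i j → Disjoint (S i) (S j)) :
    ∀ᶠ r : ℝ in 𝓝[>] 0, ∀ i j, p i j → Disjoint (thickening r (S i)) (thickening r (S j)) := by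
  simp only [eventually_all]
  exact fun i j hij => eventually_disjoint_thickening (hc i) (hcl j) (h i j hij)

theorem not_planar_K33_of_continua {a b : Fin 3 → ℂ} {S : Fin 3 → Fin 3 → Set ℂ}
    (hc : ∀ i j, IsCompact (S i j)) (hp : ∀ i j, IsPreconnected (S i j))
    (ha : ∀ i j, a i ∈ S i j) (hb : ∀ i j, b j ∈ S i j)
    (h : ∀ i j k l, i < k → j ≠ l → Disjoint (S i j) (S k l)) : False := by
  obtain ⟨r, hdisj, hr⟩ := ((eventually_forall_disjoint_thickening
    (p := fun x y : Fin 3 × Fin 3 => x.1 < y.1 ∧ x.2 ≠ y.2) (fun x => hc x.1 x.2)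
    (fun x => (hc x.1 x.2).isClosed) fun x y hxy => h _ _ _ _ hxy.1 hxy.2).and
    self_mem_nhdsWithin).exists
  choose e he using fun i j => joinedIn_of_isPreconnected_subset isOpen_thickening (hp i j)
    (self_subset_thickening hr (S i j)) (ha i j) (hb i j)
  exact not_planar_K33 e fun i j k l hik hjl => (hdisj (i, j) (k, l) ⟨hik, hjl⟩).mono
    (range_subset_iff.2 (he i j)) (range_subset_iff.2 (he k l))

/-! ### Continua in the plane crossing between two disjoint continua -/

theorem not_planar_K33_of_hubs {A : Fin 3 → Set ℂ} {J : Fin 3 → Fin 3 → Set ℂ} {y : Fin 3 → ℂ}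
    (hAc : ∀ i, IsCompact (A i)) (hAp : ∀ i, IsPreconnected (A i)) (hA : Pairwise (Disjoint on A))
    (hJc : ∀ i j, IsCompact (J i j)) (hJp : ∀ i j, IsPreconnected (J i j))
    (hy : ∀ i j, y j ∈ J i j) (hAJ : ∀ i j, (A i ∩ J i j).Nonempty)
    (hJA : ∀ i j k, i ≠ k → Disjoint (J i j) (A k))
    (hJ : ∀ i j k l, j ≠ l → Disjoint (J i j) (J k l)) : False := by
  choose a ha using fun i => (hAJ i 0).mono inter_subset_left
  refine not_planar_K33_of_continua (S := fun i j => A i ∪ J i j)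
    (fun i j => (hAc i).union (hJc i j)) (fun i j => (hAp i).union' (hAJ i j) (hJp i j))
    (fun i j => .inl (ha i)) (fun i j => .inr (hy i j)) fun i j k l hik hjl => ?_
  simp only [disjoint_union_left, disjoint_union_right]
  exact ⟨⟨hA hik.ne, hJA i j k hik.ne⟩, (hJA k l i hik.ne').symm, hJ i j k l hjl⟩

theorem exists_crossing_Icc {α : Type*} [ConditionallyCompleteLinearOrder α] [DenselyOrdered α]
    [TopologicalSpace α] [OrderTopology α] {f : α → ℝ} (hf : Continuous f) {T₁ T₂ : Set α}
    (h₁ : IsClosed T₁) (h₂ : IsClosed T₂) (hf₁ : ∀ t ∈ T₁, f t < 0) (hf₂ : ∀ t ∈ T₂, 0 < f t)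
    {a b : α} (hab : a ≤ b) (ha : a ∈ T₁) (hb : b ∈ T₂) :
    ∃ t₀ ∈ T₁, ∃ t₁ ∈ T₂, ∃ s ∈ Icc t₀ t₁, f s = 0 ∧
      Disjoint (Icc t₀ s) T₂ ∧ Disjoint (Icc s t₁) T₁ := by
  obtain ⟨t₁, ⟨ht₁, hat₁, ht₁b⟩, first⟩ := (isCompact_Icc.inter_left h₂).exists_isLeast
    ⟨b, hb, right_mem_Icc.2 hab⟩
  obtain ⟨t₀, ⟨ht₀, hat₀, ht₀₁⟩, last⟩ := (isCompact_Icc.inter_left h₁).exists_isGreatest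
    ⟨a, ha, left_mem_Icc.2 hat₁⟩
  obtain ⟨s, hs, hfs⟩ := intermediate_value_Icc ht₀₁ hf.continuousOn
    ⟨(hf₁ t₀ ht₀).le, (hf₂ t₁ ht₁).le⟩
  refine ⟨t₀, ht₀, t₁, ht₁, s, hs, hfs, Set.disjoint_left.2 fun t ht htT => ?_,
    Set.disjoint_left.2 fun t ht htT => ?_⟩
  · have htb : t ≤ b := ht.2.trans (hs.2.trans ht₁b)
    have : t = s := ht.2.antisymm (hs.2.trans (first ⟨htT, hat₀.trans ht.1, htb⟩))
    exact (hf₂ t htT).ne' (this ▸ hfs)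
  · have : t = s := ((last ⟨htT, (hat₀.trans hs.1).trans ht.1, ht.2⟩).trans hs.1).antisymm ht.1
    exact (hf₁ t htT).ne (this ▸ hfs)

theorem exists_equidistant_split {E : Type*} [PseudoMetricSpace E] [LocallyPathConnectedSpace E]
    {A₁ A₂ B U : Set E} (h₁ : IsClosed A₁) (h₂ : IsClosed A₂) (hA : Disjoint A₁ A₂)
    (hU : IsOpen U) (hBp : IsPreconnected B) (hBU : B ⊆ U) (hB₁ : (A₁ ∩ B).Nonempty)
    (hB₂ : (A₂ ∩ B).Nonempty) :
    ∃ (y : E) (J₁ J₂ : Set E), infDist y A₁ = infDist y A₂ ∧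
      (IsCompact J₁ ∧ IsPreconnected J₁ ∧ J₁ ⊆ U ∧ y ∈ J₁ ∧ (A₁ ∩ J₁).Nonempty ∧
        Disjoint J₁ A₂) ∧
      IsCompact J₂ ∧ IsPreconnected J₂ ∧ J₂ ⊆ U ∧ y ∈ J₂ ∧ (A₂ ∩ J₂).Nonempty ∧
        Disjoint J₂ A₁ := by
  obtain ⟨u, hu₁, huB⟩ := hB₁
  obtain ⟨v, hv₂, hvB⟩ := hB₂
  obtain ⟨γ, hγ⟩ := joinedIn_of_isPreconnected_subset hU hBp hBU huB hvB
  let f (x : E) : ℝ := infDist x A₁ - infDist x A₂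
  have hf : Continuous f := (continuous_infDist_pt A₁).sub (continuous_infDist_pt A₂)
  have hf₁ (x : E) (hx : x ∈ A₁) : f x < 0 := by
    simpa [f, infDist_zero_of_mem hx] using
      (h₂.notMem_iff_infDist_pos ⟨v, hv₂⟩).1 (Set.disjoint_left.1 hA hx)
  have hf₂ (x : E) (hx : x ∈ A₂) : 0 < f x := by
    simpa [f, infDist_zero_of_mem hx] using
      (h₁.notMem_iff_infDist_pos ⟨u, hu₁⟩).1 (Set.disjoint_right.1 hA hx)
  obtain ⟨t₀, ht₀, t₁, ht₁, s, hs, hfs, hd₁, hd₂⟩ := exists_crossing_Icc (hf.comp γ.continuous)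
    (h₁.preimage γ.continuous) (h₂.preimage γ.continuous) (fun t => hf₁ (γ t))
    (fun t => hf₂ (γ t)) zero_le_one (by simpa using hu₁) (by simpa using hv₂)
  have arc (a b : I) : IsCompact (γ '' Icc a b) ∧ IsPreconnected (γ '' Icc a b) ∧
      γ '' Icc a b ⊆ U :=
    ⟨isCompact_Icc.image γ.continuous, isPreconnected_Icc.image _ γ.continuous.continuousOn,
      image_subset_iff.2 fun t _ => hγ t⟩
  obtain ⟨hc₁, hp₁, hU₁⟩ := arc t₀ s
  obtain ⟨hc₂, hp₂, hU₂⟩ := arc s t₁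
  exact ⟨γ s, γ '' Icc t₀ s, γ '' Icc s t₁, sub_eq_zero.1 hfs,
    ⟨hc₁, hp₁, hU₁, mem_image_of_mem γ (right_mem_Icc.2 hs.1),
      ⟨γ t₀, ht₀, mem_image_of_mem γ (left_mem_Icc.2 hs.1)⟩, disjoint_image_left.2 hd₁⟩,
    hc₂, hp₂, hU₂, mem_image_of_mem γ (left_mem_Icc.2 hs.2),
      ⟨γ t₁, ht₁, mem_image_of_mem γ (right_mem_Icc.2 hs.2)⟩, disjoint_image_left.2 hd₂⟩

theorem exists_arms {E : Type*} [NormedAddCommGroup E] [NormedSpace ℝ E] [ProperSpace E]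
    {A : Fin 3 → Set E} {B : Set E} {d r : ℝ} (h₀ : IsClosed (A 0)) (h₁ : IsClosed (A 1))
    (hd : 0 < d) (hdr : d < r) (hA : Disjoint (thickening (2 * r) (A 0)) (thickening (2 * r) (A 1)))
    (hdA : Disjoint (thickening d B) (A 2)) (hBA : B ⊆ thickening r (A 2))
    (hB : IsPreconnected B) (hB₀ : (A 0 ∩ B).Nonempty) (hB₁ : (A 1 ∩ B).Nonempty) :
    ∃ (y : E) (J : Fin 3 → Set E), ∀ i, IsCompact (J i) ∧ IsPreconnected (J i) ∧
      J i ⊆ thickening (2 * r) B ∧ y ∈ J i ∧ (A i ∩ J i).Nonempty ∧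
      ∀ k, i ≠ k → Disjoint (J i) (A k) := by
  have hr : 0 < 2 * r := by linarith
  obtain ⟨y, J₀, J₁, hy, ⟨hc₀, hp₀, hU₀, hy₀, hm₀, hd₀⟩, hc₁, hp₁, hU₁, hy₁, hm₁, hd₁⟩ :=
    exists_equidistant_split h₀ h₁
      (hA.mono (self_subset_thickening hr _) (self_subset_thickening hr _))
      (isOpen_thickening (δ := d)) hB (self_subset_thickening hd B) hB₀ hB₁
  obtain ⟨x, hxB, hyx⟩ := mem_thickening_iff.1 (hU₀ hy₀)
  obtain ⟨v, hv, hxv⟩ := mem_thickening_iff.1 (hBA hxB)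
  have hsub : thickening d B ⊆ thickening (2 * r) B := thickening_mono (by linarith) B
  have hfar₀ : ¬infDist y (A 0) < 2 * r := fun h => Set.disjoint_left.1 hA
    ((mem_thickening_iff_infDist_lt (hB₀.mono inter_subset_left)).2 h)
    ((mem_thickening_iff_infDist_lt (hB₁.mono inter_subset_left)).2 (hy ▸ h))
  have hball {C : Set E} (hC : ¬infDist y C < 2 * r) : Disjoint (closedBall x r) C :=
    Set.disjoint_left.2 fun z hz hzC => hC <| (infDist_le_dist_of_mem hzC).trans_lt <| by
      linarith [dist_triangle_right y z x, mem_closedBall.1 hz]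
  have hball_sub : closedBall x r ⊆ thickening (2 * r) B := fun z hz =>
    mem_thickening_iff.2 ⟨x, hxB, (mem_closedBall.1 hz).trans_lt (by linarith)⟩
  refine ⟨y, ![J₀, J₁, closedBall x r], fun | 0 => ?_ | 1 => ?_ | 2 => ?_⟩
  · exact ⟨hc₀, hp₀, hU₀.trans hsub, hy₀, hm₀,
      fun | 0, h => absurd rfl h | 1, _ => hd₀ | 2, _ => hdA.mono_left hU₀⟩
  · exact ⟨hc₁, hp₁, hU₁.trans hsub, hy₁, hm₁,
      fun | 0, _ => hd₁ | 1, h => absurd rfl h | 2, _ => hdA.mono_left hU₁⟩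
  · exact ⟨isCompact_closedBall x r, (convex_closedBall x r).isPreconnected, hball_sub,
      mem_closedBall.2 (hyx.trans hdr).le, ⟨v, hv, mem_closedBall'.2 hxv.le⟩,
      fun | 0, _ => hball hfar₀ | 1, _ => hball (hy ▸ hfar₀) | 2, h => absurd rfl h⟩

theorem exists_continuum_subset_thickening {E : Type*} [PseudoMetricSpace E] {X O : Set E}
    (hX : IsCompact X) (hO : IsPathConnected O) (hXO : X ⊆ closure O) {r : ℝ} (hr : 0 < r) :
    ∃ M ⊆ O, IsCompact M ∧ IsConnected M ∧ X ⊆ thickening r M := by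
  obtain ⟨q, hq⟩ := hO.nonempty
  have hcover : X ⊆ ⋃ v ∈ O, ball v r :=
    thickening_eq_biUnion_ball (δ := r) (E := O) ▸ hXO.trans (closure_subset_thickening hr O)
  obtain ⟨t, htO, htfin, hXt⟩ := hX.elim_finite_subcover_image (fun _ _ => isOpen_ball) hcover
  obtain ⟨n, p, -, hp⟩ := (htfin.insert q).fin_param
  obtain _ | n := n
  · exact absurd (hp ▸ range_eq_empty p) (insert_nonempty q t).ne_empty
  have hpO (i : Fin (n + 1)) : p i ∈ O := insert_subset hq htO (hp ▸ mem_range_self i)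
  obtain ⟨γ, hγO, hγp⟩ := hO.exists_path_through_family p hpO
  have htγ : t ⊆ range γ := (subset_insert q t).trans (hp ▸ range_subset_iff.2 hγp)
  refine ⟨range γ, hγO, isCompact_range γ.continuous, isConnected_range γ.continuous, ?_⟩
  rw [thickening_eq_biUnion_ball]
  exact hXt.trans (biUnion_subset_biUnion_left htγ)

theorem not_three_continua_meet_two {X O A₁ A₂ : Set ℂ} {B : Fin 3 → Set ℂ} (hX : IsCompact X)
    (hO : IsOpen O) (hOc : IsConnected O) (hOX : Disjoint O X) (hXO : X ⊆ closure O)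
    (h₁ : IsCompact A₁) (h₂ : IsCompact A₂) (hp₁ : IsPreconnected A₁) (hp₂ : IsPreconnected A₂)
    (hA₁X : A₁ ⊆ X) (hA₂X : A₂ ⊆ X) (hA : Disjoint A₁ A₂) (hB : ∀ j, IsCompact (B j))
    (hBp : ∀ j, IsPreconnected (B j)) (hBX : ∀ j, B j ⊆ X) (hBd : Pairwise (Disjoint on B))
    (hB₁ : ∀ j, (A₁ ∩ B j).Nonempty) (hB₂ : ∀ j, (A₂ ∩ B j).Nonempty) : False := by
  obtain ⟨ρ, ⟨hρA, hρB⟩, hρ⟩ := (((eventually_disjoint_thickening h₁ h₂.isClosed hA).and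
    (eventually_forall_disjoint_thickening hB (fun j => (hB j).isClosed) hBd)).and
    self_mem_nhdsWithin).exists
  obtain ⟨r, rfl⟩ : ∃ r, 2 * r = ρ := ⟨ρ / 2, by ring⟩
  have hr : 0 < r := pos_of_mul_pos_right hρ two_pos.le
  obtain ⟨M, hMO, hM, hMc, hXM⟩ := exists_continuum_subset_thickening hX
    (hO.isConnected_iff_isPathConnected.1 hOc) hXO hr
  have hXMd : Disjoint X M := hOX.symm.mono_right hMO
  obtain ⟨d, hdX, hd, hdr⟩ := ((eventually_disjoint_thickening hX hM.isClosed hXMd).and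
    (Ioo_mem_nhdsGT hr)).exists
  have hdB (j : Fin 3) : Disjoint (thickening d (B j)) M :=
    hdX.mono (thickening_subset_of_subset d (hBX j)) (self_subset_thickening hd M)
  choose y J hJc hJp hJU hy hAJ hJA using fun j => exists_arms (A := ![A₁, A₂, M])
    h₁.isClosed h₂.isClosed hd hdr hρA (hdB j) ((hBX j).trans hXM) (hBp j) (hB₁ j) (hB₂ j)
  refine not_planar_K33_of_hubs (A := ![A₁, A₂, M]) (J := fun i j => J j i) ?_ ?_ ?_
    (fun i j => hJc j i) (fun i j => hJp j i) (fun i j => hy j i) (fun i j => hAJ j i)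
    (fun i j => hJA j i) fun i j k l hjl => (hρB j l hjl).mono (hJU j i) (hJU l k)
  · exact fun | 0 => h₁ | 1 => h₂ | 2 => hM
  · exact fun | 0 => hp₁ | 1 => hp₂ | 2 => hMc.isPreconnected
  · simp [pairwise_disjoint_on, Fin.forall_fin_succ, hA, hXMd.mono_left hA₁X, hXMd.mono_left hA₂X]

theorem Unshielded.exists_isOpen_isConnected {X : Set ℂ} (hX : Unshielded X) (hXc : IsCompact X) :
    ∃ O : Set ℂ, IsOpen O ∧ IsConnected O ∧ Disjoint O X ∧ X ⊆ closure O := by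
  obtain ⟨R, hR⟩ := hXc.isBounded.exists_norm_le
  have hhalf : {z : ℂ | R < z.re} ⊆ Xᶜ := fun z hz hzX =>
    (hR z hzX).not_gt (lt_of_lt_of_le hz (Complex.re_le_norm z))
  have hp : ((R + 1 : ℝ) : ℂ) ∈ {z : ℂ | R < z.re} := by simp
  have hunb : ¬Bornology.IsBounded (connectedComponentIn Xᶜ ((R + 1 : ℝ) : ℂ)) := fun hb => by
    obtain ⟨C, hC⟩ := hb.exists_norm_le
    have hw : ((max R C + 1 : ℝ) : ℂ) ∈ {z : ℂ | R < z.re} :=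
      (le_max_left R C).trans_lt (lt_add_one _)
    have hwC := (Complex.re_le_norm _).trans <| hC _ <|
      (convex_halfSpace_re_gt R).isPreconnected.subset_connectedComponentIn hp hhalf hw
    rw [Complex.ofReal_re] at hwC
    linarith [le_max_right R C]
  exact ⟨_, hXc.isClosed.isOpen_compl.connectedComponentIn,
    isConnected_connectedComponentIn_iff.2 (hhalf hp),
    disjoint_compl_left.mono_left (connectedComponentIn_subset _ _),
    (hX _ (hhalf hp) hunb).subset.trans frontier_subset_closure⟩

/-- A space is finitely bridged if, for any two disjoint subcontinua, among pairwise disjoint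
subcontinua only finitely many meet both. This is the only trace of the plane that the
factorization through the model uses. -/
def FinitelyBridged (X : Type*) [TopologicalSpace X] : Prop :=
  ∀ A₁ A₂ : Set X, IsCompact A₁ → IsCompact A₂ → IsConnected A₁ → IsConnected A₂ →
    Disjoint A₁ A₂ → ∀ B : ℕ → Set X, (∀ n, IsCompact (B n) ∧ IsConnected (B n)) →
      Pairwise (Disjoint on B) → {n | (A₁ ∩ B n).Nonempty ∧ (A₂ ∩ B n).Nonempty}.Finite

theorem finitelyBridged_of_subset_closure {X O : Set ℂ} (hX : IsCompact X) (hO : IsOpen O)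
    (hOc : IsConnected O) (hOX : Disjoint O X) (hXO : X ⊆ closure O) : FinitelyBridged X := by
  intro A₁ A₂ h₁ h₂ hc₁ hc₂ hA B hB hBd
  by_contra hinf
  let n := Set.Infinite.natEmbedding _ hinf
  have hcpt {K : Set X} (hK : IsCompact K) : IsCompact (Subtype.val '' K) :=
    hK.image continuous_subtype_val
  have hpre {K : Set X} (hK : IsConnected K) : IsPreconnected (Subtype.val '' K) :=
    hK.isPreconnected.image _ continuous_subtype_val.continuousOn
  have hmeet {K L : Set X} (h : (K ∩ L).Nonempty) :
      ((Subtype.val '' K : Set ℂ) ∩ Subtype.val '' L).Nonempty :=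
    (h.image Subtype.val).mono (image_inter_subset _ _ _)
  exact not_three_continua_meet_two (B := fun j : Fin 3 => Subtype.val '' B (n j)) hX hO hOc hOX
    hXO (hcpt h₁) (hcpt h₂) (hpre hc₁) (hpre hc₂) (Subtype.coe_image_subset _ _)
    (Subtype.coe_image_subset _ _) ((disjoint_image_iff Subtype.val_injective).2 hA)
    (fun j => hcpt (hB _).1) (fun j => hpre (hB _).2) (fun j => Subtype.coe_image_subset _ _)
    (fun i j hij => (disjoint_image_iff Subtype.val_injective).2 <| hBd fun h =>
      hij (Fin.ext (n.injective (Subtype.ext h))))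
    (fun j => hmeet (n j).2.1) (fun j => hmeet (n j).2.2)

theorem Unshielded.finitelyBridged {X : Set ℂ} (hX : Unshielded X) (hXc : IsCompact X) :
    FinitelyBridged X := by
  obtain ⟨O, hO, hOc, hOX, hXO⟩ := hX.exists_isOpen_isConnected hXc
  exact finitelyBridged_of_subset_closure hXc hO hOc hOX hXO

/-! ### Components of compact sets -/

section Components

variable {X : Type*} [TopologicalSpace X]

theorem isClosed_connectedComponentIn {F : Set X} (hF : IsClosed F) (p : X) :
    IsClosed (connectedComponentIn F p) := by
  by_cases hp : p ∈ F
  · rw [connectedComponentIn_eq_image hp]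
    exact hF.isClosedEmbedding_subtypeVal.isClosedMap _ isClosed_connectedComponent
  · rw [connectedComponentIn_eq_empty hp]
    exact isClosed_empty

variable [T2Space X]

theorem exists_isCompact_split {F U : Set X} {p : X} (hF : IsCompact F) (hp : p ∈ F)
    (hU : IsOpen U) (hFU : connectedComponentIn F p ⊆ U) :
    ∃ A B : Set X, IsCompact A ∧ IsCompact B ∧ Disjoint A B ∧ A ∪ B = F ∧ p ∈ A ∧ A ⊆ U := by
  have : CompactSpace F := isCompact_iff_compactSpace.1 hF
  rw [connectedComponentIn_eq_image hp, image_subset_iff,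
    connectedComponent_eq_iInter_isClopen] at hFU
  have : Nonempty {s : Set F // IsClopen s ∧ ⟨p, hp⟩ ∈ s} := ⟨⟨univ, isClopen_univ, mem_univ _⟩⟩
  obtain ⟨⟨V, hV, hpV⟩, hVU⟩ := exists_subset_nhds_of_compactSpace
    (V := fun s : {s : Set F // IsClopen s ∧ ⟨p, hp⟩ ∈ s} => s.1)
    (fun s t => ⟨⟨s ∩ t, s.2.1.inter t.2.1, s.2.2, t.2.2⟩, inter_subset_left, inter_subset_right⟩)
    (fun s => s.2.1.isClosed) fun x hx => (hU.preimage continuous_subtype_val).mem_nhds (hFU hx)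
  refine ⟨Subtype.val '' V, Subtype.val '' Vᶜ, hV.isClosed.isCompact.image continuous_subtype_val,
    hV.compl.isClosed.isCompact.image continuous_subtype_val,
    (disjoint_image_iff Subtype.val_injective).2 disjoint_compl_right, ?_, ⟨_, hpV, rfl⟩,
    image_subset_iff.2 hVU⟩
  rw [← image_union, union_compl_self, image_univ, Subtype.range_coe]

theorem exists_disjoint_isOpen_of_notMem_connectedComponentIn {F : Set X} {x y : X}
    (hF : IsCompact F) (hx : x ∈ F) (hy : y ∉ connectedComponentIn F x) :
    ∃ U V : Set X, IsOpen U ∧ IsOpen V ∧ Disjoint U V ∧ F ⊆ U ∪ V ∧ x ∈ U ∧ y ∈ V := by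
  obtain ⟨A, B, hA, hB, hAB, rfl, hxA, hyA⟩ := exists_isCompact_split hF hx isOpen_compl_singleton
    (subset_compl_singleton_iff.2 hy)
  obtain ⟨U, V, hU, hV, hAU, hBV, hUV⟩ := SeparatedNhds.of_isCompact_isCompact hA (hB.insert y)
    (disjoint_insert_right.2 ⟨subset_compl_singleton_iff.1 hyA, hAB⟩)
  exact ⟨U, V, hU, hV, hUV, union_subset_union hAU ((subset_insert y B).trans hBV), hAU hxA,
    hBV (mem_insert y B)⟩

theorem connectedComponentIn_diff_nonempty {F U G : Set X} {p : X} (hF : IsCompact F)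
    (hU : IsOpen U) (hUF : U ⊆ F) (hG : IsPreconnected G) (hpG : p ∈ G) (hpF : p ∈ F)
    (hGU : ¬G ⊆ U) : (connectedComponentIn F p \ U).Nonempty := by
  by_contra hempty
  have hsub : connectedComponentIn F p ⊆ U := sdiff_eq_empty.1 (not_nonempty_iff_eq_empty.1 hempty)
  obtain ⟨A, B, hA, hB, hAB, hF', hpA, hAU⟩ := exists_isCompact_split hF hpF hU hsub
  have hA_eq : A = U \ B := Subset.antisymm (fun x hx => ⟨hAU hx, Set.disjoint_left.1 hAB hx⟩)
    fun x hx => ((hF' ▸ hUF : U ⊆ A ∪ B) hx.1).resolve_right hx.2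
  have hA_open : IsOpen A := hA_eq ▸ hU.sdiff hB.isClosed
  exact hGU ((hG.subset_isClopen ⟨hA.isClosed, hA_open⟩ ⟨p, hpG, hpA⟩).trans hAU)

open TopologicalSpace.NonemptyCompacts in
theorem isClosed_setOf_isConnected :
    IsClosed {K : TopologicalSpace.NonemptyCompacts X | IsConnected (K : Set X)} := by
  rw [← isOpen_compl_iff, isOpen_iff_mem_nhds]
  intro K hK
  have hKp : ¬IsPreconnected (K : Set X) := fun h => hK ⟨K.nonempty, h⟩
  rw [isPreconnected_iff_subset_of_fully_disjoint_closed K.isCompact.isClosed] at hKp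
  push Not at hKp
  obtain ⟨u, v, hu, hv, hKuv, huv, hKu, hKv⟩ := hKp
  obtain ⟨U, V, hU, hV, huU, hvV, hUV⟩ := SeparatedNhds.of_isCompact_isCompact
    (K.isCompact.inter_right hu) (K.isCompact.inter_right hv)
    (huv.mono inter_subset_right inter_subset_right)
  have hmeet : ∀ {s t O : Set X}, (K : Set X) ⊆ s ∪ t → ¬(K : Set X) ⊆ t → (K : Set X) ∩ s ⊆ O →
      ((K : Set X) ∩ O).Nonempty := fun hst ht hO => by
    obtain ⟨x, hx, hxt⟩ := not_subset.1 ht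
    exact ⟨x, hx, hO ⟨hx, (hst hx).resolve_right hxt⟩⟩
  have hKUV : (K : Set X) ⊆ U ∪ V := fun x hx =>
    (hKuv hx).imp (fun h => huU ⟨hx, h⟩) fun h => hvV ⟨hx, h⟩
  filter_upwards [(isOpen_subsets_of_isOpen (hU.union hV)).mem_nhds hKUV,
    (isOpen_inter_nonempty_of_isOpen hU).mem_nhds (hmeet hKuv hKv huU),
    (isOpen_inter_nonempty_of_isOpen hV).mem_nhds (hmeet (union_comm u v ▸ hKuv) hKu hvV)]
    with L hLUV hLU hLV hL
  obtain ⟨x, -, hxU, hxV⟩ := hL.isPreconnected U V hU hV hLUV hLU hLV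
  exact hUV.notMem_of_mem_left hxU hxV

end Components

/-! ### Limit continua and the finest closed equivalence relation -/

section LimitContinua

open TopologicalSpace

variable {Y : Type*} [MetricSpace Y]

theorem IsLimCont.exists_tendsto {C : Set Y} (hC : IsLimCont C) :
    ∃ (K : NonemptyCompacts Y) (F : ℕ → NonemptyCompacts Y), (K : Set Y) = C ∧
      (∀ n, IsConnected (F n : Set Y)) ∧ Pairwise (Disjoint on fun n => (F n : Set Y)) ∧
      Tendsto F atTop (𝓝 K) := by
  obtain ⟨hc, hconn, F, hF, hFd, hlim⟩ := hC
  exact ⟨⟨⟨C, hc⟩, hconn.nonempty⟩, fun n => ⟨⟨F n, (hF n).1⟩, (hF n).2.nonempty⟩, rfl,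
    fun n => (hF n).2, hFd, tendsto_iff_edist_tendsto_0.2 hlim⟩

theorem isLimCont_of_tendsto {K : NonemptyCompacts Y} {F : ℕ → NonemptyCompacts Y}
    (hF : ∀ n, IsConnected (F n : Set Y)) (hFd : Pairwise (Disjoint on fun n => (F n : Set Y)))
    (hlim : Tendsto F atTop (𝓝 K)) : IsLimCont (K : Set Y) :=
  ⟨K.isCompact, isClosed_setOf_isConnected.mem_of_tendsto hlim (.of_forall hF), fun n => F n,
    fun n => ⟨(F n).isCompact, hF n⟩, hFd, tendsto_iff_edist_tendsto_0.1 hlim⟩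

end LimitContinua

section FinestRel

variable {Y : Type*} [TopologicalSpace Y] {A : Set (Set Y)} {r : Y → Y → Prop}

theorem finestRel_equivalence (A : Set (Set Y)) : Equivalence (finestRel A) where
  refl x _ hr _ := hr.refl x
  symm h r hr hA := hr.symm (h r hr hA)
  trans h h' r hr hA := hr.trans (h r hr hA) (h' r hr hA)

theorem finestRel_respects (A : Set (Set Y)) : Respects A (finestRel A) := by
  refine ⟨?_, fun a ha x hx y hy r _ hA => hA.2 a ha x hx y hy⟩
  simp only [ClosedRel, finestRel, ofPred_forall]
  exact isClosed_iInter fun r => isClosed_iInter fun _ => isClosed_iInter fun hA => hA.1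

/-- Two points are related if they lie in the same component of a class of `r`. Minimality of the
finest relation is tested against this refinement to see that its classes are connected. -/
def componentRel (r : Y → Y → Prop) (x y : Y) : Prop :=
  y ∈ connectedComponentIn {z | r x z} x

theorem componentRel_equivalence (hr : Equivalence r) : Equivalence (componentRel r) := by
  have key {x y : Y} (h : componentRel r x y) :
      connectedComponentIn {z | r x z} x = connectedComponentIn {z | r y z} y := by
    have hxy : r x y := connectedComponentIn_subset _ _ h
    have hclass : {z | r x z} = {z | r y z} :=
      Set.ext fun z => ⟨hr.trans (hr.symm hxy), hr.trans hxy⟩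
    exact hclass ▸ connectedComponentIn_eq h
  have refl (x : Y) : componentRel r x x := mem_connectedComponentIn (hr.refl x)
  exact ⟨refl, fun {x _} h => (key h).subset (refl x), fun h h' => (key h).superset h'⟩

theorem ClosedRel.componentRel [CompactSpace Y] [T2Space Y] (hr : ClosedRel r)
    (hrefl : ∀ x, r x x) : ClosedRel (componentRel r) := by
  have hclass (x : Y) : IsCompact {z | r x z} :=
    (IsClosed.preimage (Continuous.prodMk_right x) hr).isCompact
  refine isOpen_compl_iff.1 (isOpen_iff_mem_nhds.2 fun ⟨x, y⟩ hxy => ?_)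
  obtain ⟨U, V, hU, hV, hUV, hsub, hxU, hyV⟩ :=
    exists_disjoint_isOpen_of_notMem_connectedComponentIn (hclass x) (hrefl x) hxy
  have hnear : ∀ᶠ x' in 𝓝 x, ∀ z ∈ (U ∪ V)ᶜ, ¬r x' z :=
    (hU.union hV).isClosed_compl.isCompact.eventually_forall_of_forall_eventually fun z hz =>
      hr.isOpen_compl.mem_nhds fun h => hz (hsub h)
  filter_upwards [(hnear.and (hU.mem_nhds hxU)).prod_nhds (hV.mem_nhds hyV)]
    with ⟨x', y'⟩ ⟨⟨hsub', hx'⟩, hy'⟩ hxy'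
  have hcover : connectedComponentIn {z | r x' z} x' ⊆ U ∪ V := fun z hz =>
    by_contra fun hzUV => hsub' z hzUV (connectedComponentIn_subset _ _ hz)
  obtain ⟨z, -, hzU, hzV⟩ := isPreconnected_connectedComponentIn U V hU hV hcover
    ⟨x', mem_connectedComponentIn (hrefl x'), hx'⟩ ⟨y', hxy', hy'⟩
  exact hUV.notMem_of_mem_left hzU hzV

theorem isConnected_setOf_finestRel [CompactSpace Y] [T2Space Y]
    (hA : ∀ a ∈ A, IsPreconnected a) (x : Y) : IsConnected {y | finestRel A x y} := by
  have hr := finestRel_respects A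
  have hrefl := (finestRel_equivalence A).refl
  have hcomp : Respects A (componentRel (finestRel A)) := ⟨hr.1.componentRel hrefl,
    fun a ha y hy z hz => (hA a ha).subset_connectedComponentIn hy (hr.2 a ha y hy) hz⟩
  have hclass : connectedComponentIn {y | finestRel A x y} x = {y | finestRel A x y} :=
    (connectedComponentIn_subset _ _).antisymm fun y hy =>
      hy _ (componentRel_equivalence (finestRel_equivalence A)) hcomp
  exact hclass ▸ isConnected_connectedComponentIn_iff.2 (hrefl x)

end FinestRel

/-! ### Monotone maps onto finitely Suslinian spaces -/

theorem isConnected_preimage_of_monotone {W Z : Type*} [TopologicalSpace W] [CompactSpace W]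
    [TopologicalSpace Z] [T2Space Z] {f : W → Z} (hf : Continuous f) (hs : Surjective f)
    (hm : ∀ z, IsConnected (f ⁻¹' {z})) {C : Set Z} (hC : IsClosed C) (hCc : IsConnected C) :
    IsConnected (f ⁻¹' C) :=
  (hf.isClosedMap.isQuotientMap hf hs).isCoinducing.isConnected_preimage_of_isClosed hm hC hCc

section FinSus

open TopologicalSpace

variable {Z : Type*} [MetricSpace Z]

theorem FinSus.finite_setOf_connectedComponentIn (hZ : FinSus Z) {F : Set Z} (hF : IsCompact F)
    {ε : ℝ} (hε : 0 < ε) :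
    {K | (∃ p ∈ F, connectedComponentIn F p = K) ∧ ε ≤ diam K}.Finite := by
  refine hZ ε hε _ ?_ ?_
  · rintro _ ⟨⟨p, hp, rfl⟩, hdiam⟩
    exact ⟨hF.of_isClosed_subset (isClosed_connectedComponentIn hF.isClosed p)
      (connectedComponentIn_subset F p), isConnected_connectedComponentIn_iff.2 hp, hdiam⟩
  · rintro _ ⟨⟨p, -, rfl⟩, -⟩ _ ⟨⟨q, -, rfl⟩, -⟩ hne
    refine disjoint_left.2 fun z hzp hzq => hne ?_
    exact (connectedComponentIn_eq hzp).trans (connectedComponentIn_eq hzq).symm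

theorem half_le_diam_connectedComponentIn_closedBall [ProperSpace Z] {a p : Z} {ρ : ℝ}
    {G : Set Z} (hG : IsPreconnected G) (hpG : p ∈ G) (hpa : p ∈ ball a (ρ / 2))
    (hGa : ¬G ⊆ ball a ρ) : ρ / 2 ≤ diam (connectedComponentIn (closedBall a ρ) p) := by
  have hρ : 0 < ρ / 2 := dist_nonneg.trans_lt hpa
  have hp : p ∈ closedBall a ρ := ball_subset_closedBall (ball_subset_ball (by linarith) hpa)
  obtain ⟨w, hw, hwa⟩ := connectedComponentIn_diff_nonempty (isCompact_closedBall a ρ) isOpen_ball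
    ball_subset_closedBall hG hpG hp hGa
  have hwp : dist w p ≤ diam (connectedComponentIn (closedBall a ρ) p) :=
    dist_le_diam_of_mem (isBounded_closedBall.subset (connectedComponentIn_subset _ _)) hw
      (mem_connectedComponentIn hp)
  linarith [dist_triangle w p a, mem_ball.1 hpa, not_lt.1 (mt mem_ball.2 hwa)]

theorem FinSus.exists_continuum_infinite_meet [ProperSpace Z] (hZ : FinSus Z) {ι : Type*}
    {G : ι → Set Z} {s : Set ι} {a : Z} {ρ : ℝ} (hρ : 0 < ρ) (hs : s.Infinite)
    (hG : ∀ n ∈ s, IsPreconnected (G n)) (hmeet : ∀ n ∈ s, (G n ∩ ball a (ρ / 2)).Nonempty)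
    (hGa : ∀ n ∈ s, ¬G n ⊆ ball a ρ) :
    ∃ K ⊆ closedBall a ρ, IsCompact K ∧ IsConnected K ∧
      {n ∈ s | (K ∩ G n).Nonempty}.Infinite := by
  have hF : IsCompact (closedBall a ρ) := isCompact_closedBall a ρ
  by_contra! hfin
  refine hs (((hZ.finite_setOf_connectedComponentIn hF (half_pos hρ)).biUnion
    (t := fun K => {n ∈ s | (K ∩ G n).Nonempty}) ?_).subset fun n hn => ?_)
  · rintro _ ⟨⟨p, hp, rfl⟩, -⟩
    exact hfin _ (connectedComponentIn_subset _ p)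
      (hF.of_isClosed_subset (isClosed_connectedComponentIn hF.isClosed p)
        (connectedComponentIn_subset _ p)) (isConnected_connectedComponentIn_iff.2 hp)
  · obtain ⟨p, hpG, hpa⟩ := hmeet n hn
    have hp : p ∈ closedBall a ρ := ball_subset_closedBall (ball_subset_ball (by linarith) hpa)
    exact mem_biUnion ⟨⟨p, hp, rfl⟩,
      half_le_diam_connectedComponentIn_closedBall (hG n hn) hpG hpa (hGa n hn)⟩
      ⟨hn, p, mem_connectedComponentIn hp, hpG⟩

theorem FinSus.of_monotone {W : Type*} [MetricSpace W] [CompactSpace W] {m : W → Z}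
    (hmc : Continuous m) (hms : Surjective m) (hm : ∀ z, IsConnected (m ⁻¹' {z}))
    (hlim : ∀ C, IsLimCont C → ∀ x ∈ C, ∀ y ∈ C, m x = m y) : FinSus Z := by
  intro ε hε S hS hd
  by_contra hinf
  let e := Set.Infinite.natEmbedding S hinf
  have hSc (n : ℕ) : IsClosed (e n : Set Z) := (hS _ (e n).2).1.isClosed
  have hconn (n : ℕ) : IsConnected (m ⁻¹' e n) :=
    isConnected_preimage_of_monotone hmc hms hm (hSc n) (hS _ (e n).2).2.1
  let F (n : ℕ) : NonemptyCompacts W :=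
    ⟨⟨m ⁻¹' e n, ((hSc n).preimage hmc).isCompact⟩, (hconn n).nonempty⟩
  obtain ⟨C, φ, hφ, hC⟩ := CompactSpace.tendsto_subseq F
  have hdisj : Pairwise (Disjoint on fun n => ((F ∘ φ) n : Set W)) := fun i j hij =>
    (hd (e (φ i)).2 (e (φ j)).2 fun h =>
      hij (hφ.injective (e.injective (Subtype.ext h)))).preimage m
  have hCm := hlim C (isLimCont_of_tendsto (fun n => hconn (φ n)) hdisj hC)
  obtain ⟨c, hc⟩ := C.nonempty
  have hCball : (C : Set W) ⊆ m ⁻¹' ball (m c) (ε / 4) := fun x hx =>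
    (hCm x hx c hc).symm ▸ mem_ball_self (by positivity)
  obtain ⟨n, hn⟩ := (hC.eventually ((NonemptyCompacts.isOpen_subsets_of_isOpen
    (isOpen_ball.preimage hmc)).mem_nhds hCball)).exists
  have hball : (e (φ n) : Set Z) ⊆ ball (m c) (ε / 4) :=
    (preimage_subset_preimage_iff (by simp [hms.range_eq])).1 hn
  linarith [(hS _ (e (φ n)).2).2.2, (diam_mono hball isBounded_ball).trans
    (diam_ball (x := m c) (by positivity : 0 ≤ ε / 4))]

theorem FinSus.exists_disjoint_continua_infinite_meet [ProperSpace Z] (hZ : FinSus Z) {ι : Type*}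
    {G : ι → Set Z} (hG : ∀ n, IsPreconnected (G n)) {a b : Z} (hab : a ≠ b)
    (hinf : ∀ r > 0, {n | (G n ∩ ball a r).Nonempty ∧ (G n ∩ ball b r).Nonempty}.Infinite) :
    ∃ K L : Set Z, IsCompact K ∧ IsConnected K ∧ IsCompact L ∧ IsConnected L ∧ Disjoint K L ∧
      {n | (K ∩ G n).Nonempty ∧ (L ∩ G n).Nonempty}.Infinite := by
  obtain ⟨ρ, hρ, hρab⟩ : ∃ ρ > 0, ρ + ρ < dist a b :=
    ⟨dist a b / 3, div_pos (dist_pos.2 hab) three_pos, by linarith [dist_pos.2 hab]⟩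
  have hdisj : Disjoint (closedBall a ρ) (closedBall b ρ) := closedBall_disjoint_closedBall hρab
  have hleave {c d : Z} (hcd : Disjoint (closedBall c ρ) (closedBall d ρ)) (n : ι)
      (h : (G n ∩ ball d (ρ / 2)).Nonempty) : ¬G n ⊆ ball c ρ := fun hsub => by
    obtain ⟨w, hwG, hwd⟩ := h
    exact disjoint_left.1 hcd (ball_subset_closedBall (hsub hwG))
      (ball_subset_closedBall (ball_subset_ball (by linarith) hwd))
  obtain ⟨K, hKa, hK, hKc, hKinf⟩ := hZ.exists_continuum_infinite_meet hρ
    (hinf (ρ / 2) (half_pos hρ)) (fun n _ => hG n) (fun _ hn => hn.1)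
    fun n hn => hleave hdisj n hn.2
  obtain ⟨L, hLb, hL, hLc, hLinf⟩ := hZ.exists_continuum_infinite_meet hρ hKinf
    (fun n _ => hG n) (fun _ hn => hn.1.2) fun n hn => hleave hdisj.symm n hn.1.1
  exact ⟨K, L, hK, hKc, hL, hLc, hdisj.mono hKa hLb, hLinf.mono fun n hn => ⟨hn.1.2, hn.2⟩⟩

theorem FinitelyBridged.eq_of_mem_isLimCont {X : Type*} [MetricSpace X] [CompactSpace X]
    (hX : FinitelyBridged X) (hZ : FinSus Z) {φ : X → Z} (hφ : Continuous φ) (hφs : Surjective φ)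
    (hφm : ∀ z, IsConnected (φ ⁻¹' {z})) {C : Set X} (hC : IsLimCont C) {x y : X} (hx : x ∈ C)
    (hy : y ∈ C) : φ x = φ y := by
  by_contra hne
  have : CompactSpace Z := hφs.compactSpace hφ
  obtain ⟨C, F, rfl, hF, hFd, hlim⟩ := hC.exists_tendsto
  have hnear {z : X} (hz : z ∈ (C : Set X)) {r : ℝ} (hr : 0 < r) :
      ∀ᶠ n in atTop, (φ '' F n ∩ ball (φ z) r).Nonempty := by
    simp only [image_inter_nonempty_iff]
    exact hlim.eventually ((NonemptyCompacts.isOpen_inter_nonempty_of_isOpen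
      (isOpen_ball.preimage hφ)).mem_nhds ⟨z, hz, mem_ball_self hr⟩)
  obtain ⟨K, L, hK, hKc, hL, hLc, hKL, hinf⟩ := hZ.exists_disjoint_continua_infinite_meet
    (fun n => (hF n).isPreconnected.image φ hφ.continuousOn) hne fun r hr =>
      Nat.frequently_atTop_iff_infinite.1 ((hnear hx hr).and (hnear hy hr)).frequently
  have hmeet {M : Set Z} {n : ℕ} (h : (M ∩ φ '' F n).Nonempty) :
      (φ ⁻¹' M ∩ (F n : Set X)).Nonempty := by
    rwa [inter_comm, ← image_inter_nonempty_iff, inter_comm]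
  exact hinf ((hX (φ ⁻¹' K) (φ ⁻¹' L) (hK.isClosed.preimage hφ).isCompact
    (hL.isClosed.preimage hφ).isCompact
    (isConnected_preimage_of_monotone hφ hφs hφm hK.isClosed hKc)
    (isConnected_preimage_of_monotone hφ hφs hφm hL.isClosed hLc) (hKL.preimage φ)
    (fun n => F n) (fun n => ⟨(F n).isCompact, hF n⟩) hFd).subset fun _ hn =>
      ⟨hmeet hn.1, hmeet hn.2⟩)

end FinSus

theorem finest_finitely_Suslinian_monotone_model_general {X : Type*} [MetricSpace X]
    [CompactSpace X] (hX : FinitelyBridged X) {Y : Type*} [MetricSpace Y] (m : X → Y)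
    (hmc : Continuous m) (hms : Surjective m)
    (hfib : ∀ x y, m x = m y ↔ finestRel {C : Set X | IsLimCont C} x y) :
    FinSus Y ∧ (∀ y, IsConnected (m ⁻¹' {y})) ∧
    ∀ (Z : Type*) [MetricSpace Z], FinSus Z → ∀ φ : X → Z, Continuous φ → Surjective φ →
      (∀ z, IsConnected (φ ⁻¹' {z})) → ∃ g : Y → Z, Continuous g ∧ φ = g ∘ m := by
  have hfiber (y : Y) : IsConnected (m ⁻¹' {y}) := by
    obtain ⟨x, rfl⟩ := hms y
    have hclass : m ⁻¹' {m x} = {z | finestRel {C : Set X | IsLimCont C} x z} :=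
      Set.ext fun z => eq_comm.trans (hfib x z)
    exact hclass ▸ isConnected_setOf_finestRel (fun C hC => hC.2.1.isPreconnected) x
  have hcollapse (C : Set X) (hC : IsLimCont C) (x) (hx : x ∈ C) (y) (hy : y ∈ C) : m x = m y :=
    (hfib x y).2 ((finestRel_respects _).2 C hC x hx y hy)
  refine ⟨.of_monotone hmc hms hfiber hcollapse, hfiber, fun Z _ hZ φ hφ hφs hφm => ?_⟩
  have hφ_collapse : Respects {C | IsLimCont C} fun x y => φ x = φ y :=
    ⟨isClosed_eq (hφ.comp continuous_fst) (hφ.comp continuous_snd), fun C hC x hx y hy =>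
      hX.eq_of_mem_isLimCont hZ hφ hφs hφm hC hx hy⟩
  have hφ_fiber : FactorsThrough φ m := fun x y h =>
    (hfib x y).1 h _ (eq_equivalence.comap φ) hφ_collapse
  have hm : IsQuotientMap (⟨m, hmc⟩ : C(X, Y)) := hmc.isClosedMap.isQuotientMap hmc hms
  have hlift := hm.lift_comp ⟨φ, hφ⟩ hφ_fiber
  exact ⟨hm.lift ⟨φ, hφ⟩ hφ_fiber, map_continuous _, congrArg DFunLike.coe hlift.symm⟩

/-- for an unshielded planar compactum `X`, the quotient map by the finest
closed equivalence relation respecting the limit continua of `X` (realized by a continuous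
surjection `m` onto a compact metric space `Y` whose fibers are exactly the classes) is the
finest finitely Suslinian monotone model of `X`: `Y` is finitely Suslinian, `m` is monotone,
and every monotone continuous surjection of `X` onto a finitely Suslinian compactum factors
through `m`. -/
theorem finest_finitely_Suslinian_monotone_model
    (X : Set ℂ) (hXc : IsCompact X) (hXu : Unshielded X)
    {Y : Type*} [MetricSpace Y] [CompactSpace Y]
    (m : X → Y) (hmc : Continuous m) (hms : Function.Surjective m)
    (hfib : ∀ x y : X, m x = m y ↔ finestRel {C : Set X | IsLimCont C} x y) :
    FinSus Y ∧ (∀ y : Y, IsConnected (m ⁻¹' {y})) ∧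
    ∀ (Z : Type) [MetricSpace Z] [CompactSpace Z], FinSus Z →
      ∀ φ : X → Z, Continuous φ → Function.Surjective φ →
        (∀ z : Z, IsConnected (φ ⁻¹' {z})) →
        ∃ g : Y → Z, Continuous g ∧ φ = g ∘ m := by
  have : CompactSpace X := isCompact_iff_compactSpace.1 hXc
  obtain ⟨hY, hm, hfactor⟩ := finest_finitely_Suslinian_monotone_model_general
    (hXu.finitelyBridged hXc) m hmc hms hfib
  exact ⟨hY, hm, fun Z _ _ => hfactor Z⟩
end
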